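/- arXiv:2405.08390 — 5 statements merged into one kernel-verified Lean document; each statement's English description precedes it below -/
import Mathlib

section
/- Let d ≥ 2 and r > 0. There exists a continuous strictly increasing function Ψ : [0,∞) → [0,∞) with Ψ(0) = 0 such that for every w̄ = (v̄, Ū) ∈ K_r^co one has dist(w̄, K_r) ≤ Ψ(r − |v̄|²). In particular, if w̄ = (v̄, Ū) ∈ K_r^co and |v̄|² = r, then w̄ ∈ K_r. -/
open MeasureTheory

noncomputable section

/-- Vectors in ℝ^d. -/
abbrev Vec (d : ℕ) := Fin d → ℝ

/-- Matrices (as functions). -/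
abbrev Mat (d : ℕ) := Fin d → Fin d → ℝ

/-- The space S₀^{d×d} of symmetric trace-free d×d matrices, as a submodule. -/
def S0 (d : ℕ) : Submodule ℝ (Mat d) where
  carrier := {U | (∀ i j, U i j = U j i) ∧ ∑ i, U i i = 0}
  add_mem' := by
    rintro U V ⟨hU1, hU2⟩ ⟨hV1, hV2⟩
    refine ⟨fun i j => by simp [hU1 i j, hV1 i j], ?_⟩
    simp [Finset.sum_add_distrib, hU2, hV2]
  zero_mem' := ⟨fun i j => rfl, by simp⟩
  smul_mem' := by
    rintro c U ⟨hU1, hU2⟩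
    refine ⟨fun i j => by simp [hU1 i j], ?_⟩
    simp [← Finset.mul_sum, hU2]

/-- Partial derivative ∂ᵢ of a scalar function. -/
def pd {d : ℕ} (i : Fin d) (f : Vec d → ℝ) (x : Vec d) : ℝ :=
  fderiv ℝ f x (Pi.single i 1)

/-- The wave cone Λ: states `(v̄, Ū)` with `v̄ ≠ 0` for which there are `q̄ ∈ ℝ` and
`ξ ≠ 0` with `Ū ξ + q̄ ξ = 0` and `v̄ · ξ = 0`. -/
def Lam (d : ℕ) : Set (Vec d × S0 d) :=
  {w | w.1 ≠ 0 ∧ ∃ (q : ℝ) (ξ : Vec d), ξ ≠ 0 ∧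
    (∀ i, (∑ j, (w.2 : Mat d) i j * ξ j) + q * ξ i = 0) ∧ (∑ i, w.1 i * ξ i = 0)}

/-- The constraint set `K_r = {(v, U) : U = v ⊗ v − (r/d)·I_d}` inside ℝ^d × S₀^{d×d}.
(Note that trace-freeness of `U` forces `|v|² = r` on `K_r`.) -/
def Kset (d : ℕ) (r : ℝ) : Set (Vec d × S0 d) :=
  {w | ∀ i j, (w.2 : Mat d) i j = w.1 i * w.1 j - (r / d) * (if i = j then 1 else 0)}

lemma hull_quad {d : ℕ} {r : ℝ} (i j : Fin d) (hij : i ≠ j) (s : ℝ) (w : Vec d × S0 d)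
    (hw : w ∈ convexHull ℝ (Kset d r)) :
    (w.1 i + s * w.1 j) ^ 2 ≤ (w.2 : Mat d) i i + 2 * s * (w.2 : Mat d) i j
      + s ^ 2 * (w.2 : Mat d) j j + (1 + s ^ 2) * (r / d) := by
  have hc : Convex ℝ {w : Vec d × S0 d | (w.1 i + s * w.1 j) ^ 2 ≤
      (w.2 : Mat d) i i + 2 * s * (w.2 : Mat d) i j
      + s ^ 2 * (w.2 : Mat d) j j + (1 + s ^ 2) * (r / d)} := by
    intro x hx y hy a b ha hb hab
    simp only [Set.mem_setOf_eq] at hx hy ⊢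
    simp only [Prod.fst_add, Prod.snd_add, Prod.smul_fst, Prod.smul_snd, Pi.add_apply,
      Pi.smul_apply, smul_eq_mul, Submodule.coe_add, Submodule.coe_smul]
    have h1 := mul_le_mul_of_nonneg_left hx ha
    have h2 := mul_le_mul_of_nonneg_left hy hb
    have h3 : 0 ≤ a * b * ((x.1 i + s * x.1 j) - (y.1 i + s * y.1 j)) ^ 2 := by positivity
    have hb' : b = 1 - a := by linarith
    subst hb'
    nlinarith
  refine convexHull_min ?_ hc hw
  intro x hx
  have h1 := hx i i
  have h2 := hx i j
  have h3 := hx j j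
  simp only [if_true, hij, if_false] at h1 h2 h3
  simp only [Set.mem_setOf_eq, h1, h2, h3]
  apply le_of_eq
  ring

lemma trace_M {d : ℕ} (hd : 2 ≤ d) (r : ℝ) (w : Vec d × S0 d) :
    ∑ i, ((w.2 : Mat d) i i - w.1 i ^ 2 + r / d) = r - ∑ i, w.1 i ^ 2 := by
  have h := w.2.2.2
  have hd' : (d : ℝ) ≠ 0 := by positivity
  rw [Finset.sum_add_distrib, Finset.sum_sub_distrib, h]
  simp
  field_simp
  ring

lemma M_bound {d : ℕ} (hd : 2 ≤ d) {r : ℝ} (w : Vec d × S0 d)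
    (hw : w ∈ convexHull ℝ (Kset d r)) (i j : Fin d) :
    |(w.2 : Mat d) i j - (w.1 i * w.1 j - (r / d) * (if i = j then 1 else 0))|
      ≤ r - ∑ i, w.1 i ^ 2 := by
  haveI : Nontrivial (Fin d) := Fin.nontrivial_iff_two_le.2 hd
  have hn : ∀ i, 0 ≤ (w.2 : Mat d) i i - w.1 i ^ 2 + r / d := by
    intro i
    obtain ⟨k, hk⟩ := exists_ne i
    have := hull_quad i k hk.symm 0 w hw
    simp at this
    linarith
  have hu : ∀ i, (w.2 : Mat d) i i - w.1 i ^ 2 + r / d ≤ r - ∑ i, w.1 i ^ 2 := by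
    intro i
    rw [← trace_M hd r w]
    exact Finset.single_le_sum (f := fun i => (w.2 : Mat d) i i - w.1 i ^ 2 + r / d)
      (fun k _ => hn k) (Finset.mem_univ i)
  by_cases hij : i = j
  · subst hij
    have h1 := hn i
    have h2 := hu i
    simp only [if_true]
    rw [abs_le]
    constructor <;> nlinarith
  · have h1 := hull_quad i j hij 1 w hw
    have h2 := hull_quad i j hij (-1) w hw
    have h3 := hu i
    have h4 := hu j
    simp only [hij, if_false]
    rw [abs_le]
    constructor <;> nlinarith

lemma K_norm {d : ℕ} (hd : 2 ≤ d) {r : ℝ} (w : Vec d × S0 d) (hw : w ∈ Kset d r) :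
    ∑ i, w.1 i ^ 2 = r := by
  have h := trace_M hd r w
  have : ∑ i, ((w.2 : Mat d) i i - w.1 i ^ 2 + r / d) = 0 := by
    apply Finset.sum_eq_zero
    intro i _
    have := hw i i
    simp only [if_true] at this
    rw [this]; ring
  linarith

lemma exists_near {d : ℕ} (hd : 2 ≤ d) {r : ℝ} (w : Vec d × S0 d)
    (hw : w ∈ convexHull ℝ (Kset d r)) :
    ∃ x ∈ Kset d r, ∑ i, (w.1 i - x.1 i) ^ 2 ≤ r - ∑ i, w.1 i ^ 2 := by
  by_contra! hcon
  have hc : Convex ℝ {x : Vec d × S0 d | ∑ i, w.1 i * x.1 i < ∑ i, w.1 i ^ 2} := by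
    apply convex_halfSpace_lt
    constructor
    · intro x y
      simp [mul_add, Finset.sum_add_distrib]
    · intro c x
      simp only [Prod.smul_fst, Pi.smul_apply, smul_eq_mul, Finset.mul_sum]
      exact Finset.sum_congr rfl fun i _ => by ring
  have : w ∈ {x : Vec d × S0 d | ∑ i, w.1 i * x.1 i < ∑ i, w.1 i ^ 2} := by
    refine convexHull_min ?_ hc hw
    intro x hx
    have h1 := hcon x hx
    have h2 := K_norm hd x hx
    have h3 : ∑ i, (w.1 i - x.1 i) ^ 2
        = ∑ i, w.1 i ^ 2 - 2 * ∑ i, w.1 i * x.1 i + ∑ i, x.1 i ^ 2 := by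
      rw [Finset.mul_sum, ← Finset.sum_sub_distrib, ← Finset.sum_add_distrib]
      exact Finset.sum_congr rfl fun i _ => by ring
    simp only [Set.mem_setOf_eq]
    linarith
  simp only [Set.mem_setOf_eq] at this
  have h4 : ∑ i, w.1 i * w.1 i = ∑ i, w.1 i ^ 2 :=
    Finset.sum_congr rfl fun i _ => by ring
  linarith

/-- Let `d ≥ 2`, `r > 0`. There is a continuous strictly increasing
`Ψ : [0,∞) → [0,∞)` with `Ψ 0 = 0` such that `dist(w̄, K_r) ≤ Ψ(r − |v̄|²)` for every
`w̄ = (v̄, Ū) ∈ K_r^co`. In particular, if `w̄ ∈ K_r^co` and `|v̄|² = r` then `w̄ ∈ K_r`. -/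
theorem stmt11 (d : ℕ) (hd : 2 ≤ d) (r : ℝ) (hr : 0 < r) :
    ∃ Ψ : ℝ → ℝ,
      ContinuousOn Ψ (Set.Ici 0) ∧ StrictMonoOn Ψ (Set.Ici 0) ∧ Ψ 0 = 0 ∧
      (∀ t ∈ Set.Ici (0 : ℝ), 0 ≤ Ψ t) ∧
      (∀ w ∈ convexHull ℝ (Kset d r),
        Metric.infDist w (Kset d r) ≤ Ψ (r - ∑ i, (w.1 i) ^ 2)) ∧
      (∀ w ∈ convexHull ℝ (Kset d r), (∑ i, (w.1 i) ^ 2 = r) → w ∈ Kset d r) := by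
  have hd0 : 0 < d := by omega
  refine ⟨fun t => t + (1 + 2 * √r) * √t, ?_, ?_, by simp, ?_, ?_, ?_⟩
  · fun_prop
  · intro a ha b hb hab
    have h1 : √a ≤ √b := Real.sqrt_le_sqrt hab.le
    have h2 : 0 ≤ 1 + 2 * √r := by positivity
    have := mul_le_mul_of_nonneg_left h1 h2
    simp only
    linarith
  · intro t ht
    have : (0 : ℝ) ≤ t := ht
    positivity
  · intro w hw
    obtain ⟨x, hx, hxw⟩ := exists_near hd w hw
    have hM := M_bound hd w hw
    have hxr := K_norm hd x hx
    set t := r - ∑ i, w.1 i ^ 2 with ht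
    have ht0 : 0 ≤ t := le_trans (abs_nonneg _) (hM ⟨0, hd0⟩ ⟨0, hd0⟩)
    have hs0 := Real.sqrt_nonneg t
    have hr0 := Real.sqrt_nonneg r
    have hp : 0 ≤ √r * √t := mul_nonneg hr0 hs0
    have hv : ∀ i, |w.1 i - x.1 i| ≤ √t := by
      intro i
      apply Real.abs_le_sqrt
      exact le_trans (Finset.single_le_sum (f := fun i => (w.1 i - x.1 i) ^ 2)
        (fun k _ => sq_nonneg _) (Finset.mem_univ i)) hxw
    have hxb : ∀ i, |x.1 i| ≤ √r := by
      intro i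
      apply Real.abs_le_sqrt
      rw [← hxr]
      exact Finset.single_le_sum (f := fun i => (x.1 i) ^ 2)
        (fun k _ => sq_nonneg _) (Finset.mem_univ i)
    have hwb : ∀ i, |w.1 i| ≤ √r := by
      intro i
      apply Real.abs_le_sqrt
      refine le_trans (Finset.single_le_sum (f := fun i => (w.1 i) ^ 2)
        (fun k _ => sq_nonneg _) (Finset.mem_univ i)) ?_
      linarith
    have hnn : 0 ≤ t + (1 + 2 * √r) * √t := by positivity
    refine le_trans (Metric.infDist_le_dist_of_mem hx) ?_
    rw [Prod.dist_eq]
    apply max_le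
    · rw [dist_pi_le_iff hnn]
      intro i
      rw [Real.dist_eq]
      have := hv i
      nlinarith
    · rw [Subtype.dist_eq, dist_pi_le_iff hnn]
      intro i
      rw [dist_pi_le_iff hnn]
      intro j
      rw [Real.dist_eq, hx i j]
      have e : (w.2 : Mat d) i j - (x.1 i * x.1 j - (r / d) * (if i = j then 1 else 0))
        = ((w.2 : Mat d) i j - (w.1 i * w.1 j - (r / d) * (if i = j then 1 else 0)))
          + (w.1 i * (w.1 j - x.1 j) + (w.1 i - x.1 i) * x.1 j) := by ring
      rw [e]
      have b1 : |w.1 i * (w.1 j - x.1 j)| ≤ √r * √t := by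
        rw [abs_mul]
        exact mul_le_mul (hwb i) (hv j) (abs_nonneg _) hr0
      have b2 : |(w.1 i - x.1 i) * x.1 j| ≤ √t * √r := by
        rw [abs_mul]
        exact mul_le_mul (hv i) (hxb j) (abs_nonneg _) hs0
      have b3 := hM i j
      have b4 := abs_add_le ((w.2 : Mat d) i j
        - (w.1 i * w.1 j - (r / d) * (if i = j then 1 else 0)))
        (w.1 i * (w.1 j - x.1 j) + (w.1 i - x.1 i) * x.1 j)
      have b5 := abs_add_le (w.1 i * (w.1 j - x.1 j)) ((w.1 i - x.1 i) * x.1 j)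
      nlinarith
  · intro w hw hwr i j
    have := M_bound hd w hw i j
    rw [hwr, sub_self] at this
    exact sub_eq_zero.1 (abs_nonpos_iff.1 this)
end
end

section
/- Let d ≥ 2, r > 0, v ∈ ℝ^d and U ∈ S₀^{d×d}, and suppose that v⊗v − U ≤ (r/d)·I_d, where for symmetric matrices A ≤ B means B − A is positive semidefinite. Then |v|² ≤ r and the operator norm of U satisfies ‖U‖ ≤ r. -/
noncomputable section

/-- The operator (spectral) norm of a real d×d matrix, i.e. the norm of the induced
linear map between Euclidean spaces. -/
def opNorm {d : ℕ} (U : Matrix (Fin d) (Fin d) ℝ) : ℝ :=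
  ‖LinearMap.toContinuousLinearMap (Matrix.toEuclideanLin U)‖

/-- Let `d ≥ 2`, `r > 0`, `v ∈ ℝ^d`, `U ∈ S₀^{d×d}` with
`v⊗v − U ≤ (r/d)·I_d` (i.e. `ξᵀ(v⊗v − U)ξ ≤ (r/d)|ξ|²` for all `ξ`).
Then `|v|² ≤ r` and the operator norm of `U` satisfies `‖U‖ ≤ r`. -/
theorem stmt12 (d : ℕ) (hd : 2 ≤ d) (r : ℝ) (hr : 0 < r)
    (v : Vec d) (U : Matrix (Fin d) (Fin d) ℝ)
    (hsymm : ∀ i j, U i j = U j i) (htr : ∑ i, U i i = 0)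
    (hpsd : ∀ ξ : Vec d,
      ∑ i, ∑ j, (v i * v j - U i j) * ξ i * ξ j ≤ (r / d) * ∑ i, (ξ i) ^ 2) :
    (∑ i, (v i) ^ 2 ≤ r) ∧ opNorm U ≤ r := by
  have hd0 : (0:ℝ) < d := by exact_mod_cast (by omega : 0 < d)
  constructor
  · have h : ∀ k, v k ^ 2 - U k k ≤ r / d := by
      intro k
      have := hpsd (Pi.single k 1)
      simpa [Pi.single_apply, ite_pow, pow_two] using this
    have h2 := Finset.sum_le_sum (fun k (_ : k ∈ Finset.univ) => h k)
    rw [Finset.sum_sub_distrib, htr] at h2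
    simp only [Finset.sum_const, Finset.card_univ, Fintype.card_fin, nsmul_eq_mul] at h2
    rw [mul_div_cancel₀ _ hd0.ne'] at h2
    linarith
  · have hU : U.IsHermitian := by
      ext i j
      simp [hsymm i j]
    have hlow : ∀ k, -(r / d) ≤ hU.eigenvalues k := by
      intro k
      have h1 := hpsd (fun i => hU.eigenvectorBasis k i)
      have hn : ∑ i, (hU.eigenvectorBasis k i) ^ 2 = 1 := by
        have := hU.eigenvectorBasis.orthonormal.1 k
        rw [EuclideanSpace.norm_eq, Real.sqrt_eq_one] at this
        simpa using this
      have he : ∀ i, ∑ j, U i j * hU.eigenvectorBasis k j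
          = hU.eigenvalues k * hU.eigenvectorBasis k i := by
        intro i
        have := congrFun (hU.mulVec_eigenvectorBasis k) i
        simpa [Matrix.mulVec, dotProduct] using this
      have hs : ∑ i, ∑ j, (v i * v j - U i j) * hU.eigenvectorBasis k i
          * hU.eigenvectorBasis k j
          = (∑ i, v i * hU.eigenvectorBasis k i) ^ 2 - hU.eigenvalues k := by
        have e1 : ∀ i, ∑ j, (v i * v j - U i j) * hU.eigenvectorBasis k i
            * hU.eigenvectorBasis k j
            = (v i * hU.eigenvectorBasis k i) * (∑ j, v j * hU.eigenvectorBasis k j)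
              - hU.eigenvalues k * (hU.eigenvectorBasis k i) ^ 2 := by
          intro i
          have : hU.eigenvalues k * (hU.eigenvectorBasis k i) ^ 2
            = hU.eigenvectorBasis k i * ∑ j, U i j * hU.eigenvectorBasis k j := by
            rw [he]; ring
          rw [this, Finset.mul_sum, Finset.mul_sum, ← Finset.sum_sub_distrib]
          exact Finset.sum_congr rfl fun j _ => by ring
        rw [Finset.sum_congr rfl fun i _ => e1 i, Finset.sum_sub_distrib,
          ← Finset.sum_mul, ← Finset.mul_sum, hn]
        ring
      rw [hs, hn] at h1
      nlinarith [sq_nonneg (∑ i, v i * hU.eigenvectorBasis k i)]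
    have hsum : ∑ k, hU.eigenvalues k = 0 := by
      have := hU.trace_eq_sum_eigenvalues
      simp only [Matrix.trace, Matrix.diag_apply, htr] at this
      simpa using this.symm
    have hrd : 0 < r / d := by positivity
    have hup : ∀ k, hU.eigenvalues k ≤ r := by
      intro k
      have h1 := Finset.single_le_sum (f := fun k => hU.eigenvalues k + r / d)
        (fun i _ => by linarith [hlow i]) (Finset.mem_univ k)
      rw [Finset.sum_add_distrib, hsum] at h1
      simp only [Finset.sum_const, Finset.card_univ, Fintype.card_fin, nsmul_eq_mul] at h1
      rw [mul_div_cancel₀ _ hd0.ne'] at h1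
      linarith
    have hle : r / d ≤ r := div_le_self hr.le (by exact_mod_cast (by omega : 1 ≤ d))
    have hsq : ∀ k, hU.eigenvalues k ^ 2 ≤ r ^ 2 := fun k =>
      sq_le_sq' (by linarith [hlow k]) (hup k)
    unfold opNorm
    refine ContinuousLinearMap.opNorm_le_bound _ hr.le fun x => ?_
    rw [LinearMap.coe_toContinuousLinearMap']
    have hsa : (Matrix.toEuclideanLin U).IsSymmetric :=
      Matrix.isSymmetric_toEuclideanLin_iff.mpr hU
    have hc : ∀ k, inner ℝ (hU.eigenvectorBasis k) (Matrix.toEuclideanLin U x)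
        = hU.eigenvalues k * inner ℝ (hU.eigenvectorBasis k) x := by
      intro k
      rw [← hsa]
      have : Matrix.toEuclideanLin U (hU.eigenvectorBasis k)
          = hU.eigenvalues k • hU.eigenvectorBasis k := by
        ext i
        have := congrFun (hU.mulVec_eigenvectorBasis k) i
        simpa using this
      rw [this, real_inner_smul_left]
    refine le_of_sq_le_sq ?_ (by positivity)
    rw [mul_pow, ← hU.eigenvectorBasis.sum_sq_norm_inner_right,
      ← hU.eigenvectorBasis.sum_sq_norm_inner_right x, Finset.mul_sum]
    refine Finset.sum_le_sum fun k _ => ?_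
    rw [hc, norm_mul, mul_pow]
    refine mul_le_mul_of_nonneg_right ?_ (by positivity)
    simpa using hsq k
end
end

section
/- Let d = 2, let v̄ ∈ ℝ²∖{0} and Ū ∈ S₀^{2×2}. Then (v̄, Ū) ∈ Λ if and only if (Ūv̄)·v̄^⊥ = 0, where v̄^⊥ = (−v̄₂, v̄₁). Equivalently, (v̄, Ū) ∈ Λ if and only if v̄^⊥ is an eigenvector of Ū. -/
open MeasureTheory

noncomputable section

/-- Let `d = 2`, `v̄ ∈ ℝ²∖{0}`, `Ū ∈ S₀^{2×2}`. Then `(v̄, Ū) ∈ Λ`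
iff `(Ū v̄) · v̄^⊥ = 0` where `v̄^⊥ = (−v̄₂, v̄₁)`; equivalently, iff `v̄^⊥` is an
eigenvector of `Ū`. -/
theorem stmt14 (v : Vec 2) (hv : v ≠ 0) (U : S0 2) :
    ((v, U) ∈ Lam 2 ↔
      (∑ i, (∑ j, (U : Mat 2) i j * v j) * (![-(v 1), v 0]) i = 0)) ∧
    ((v, U) ∈ Lam 2 ↔
      (∃ μ : ℝ, (fun i => ∑ j, (U : Mat 2) i j * (![-(v 1), v 0]) j)
        = μ • ![-(v 1), v 0])) := by
  obtain ⟨U, hs, ht⟩ := U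
  have h10 : U 1 0 = U 0 1 := hs 1 0
  have h11 : U 1 1 = - U 0 0 := by
    rw [Fin.sum_univ_two] at ht
    linarith
  have hN : 0 < v 0 ^ 2 + v 1 ^ 2 := by
    by_contra hc
    apply hv
    have h0 : v 0 = 0 := by nlinarith [sq_nonneg (v 0), sq_nonneg (v 1)]
    have h1 : v 1 = 0 := by nlinarith [sq_nonneg (v 0), sq_nonneg (v 1)]
    funext i
    fin_cases i
    · exact h0
    · exact h1
  have hA : (v, (⟨U, hs, ht⟩ : S0 2)) ∈ Lam 2 →
      (∑ i, (∑ j, U i j * v j) * (![-(v 1), v 0]) i = 0) := by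
    rintro ⟨-, q, ξ, hξ, he, ho⟩
    have e0 := he 0
    have e1 := he 1
    simp only [Fin.sum_univ_two, h10, h11] at e0 e1 ho
    simp only [Fin.sum_univ_two, h10, h11, Matrix.cons_val_zero, Matrix.cons_val_one]
    have k0 : (v 0 ^ 2 + v 1 ^ 2) * ξ 0 = - v 1 * (-v 1 * ξ 0 + v 0 * ξ 1) := by
      linear_combination v 0 * ho
    have k1 : (v 0 ^ 2 + v 1 ^ 2) * ξ 1 = v 0 * (-v 1 * ξ 0 + v 0 * ξ 1) := by
      linear_combination v 1 * ho
    have hT : (-v 1 * ξ 0 + v 0 * ξ 1) ≠ 0 := by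
      intro h
      rw [h, mul_zero] at k0 k1
      apply hξ
      funext i
      fin_cases i
      · exact (mul_eq_zero.mp k0).resolve_left hN.ne'
      · exact (mul_eq_zero.mp k1).resolve_left hN.ne'
    apply (mul_eq_zero.mp _).resolve_left hT
    linear_combination (v 0 ^ 2 + v 1 ^ 2) * (v 0 * e0 + v 1 * e1)
      - (U 0 0 * v 0 + U 0 1 * v 1 + q * v 0) * k0
      - (U 0 1 * v 0 - U 0 0 * v 1 + q * v 1) * k1
  have hB : (∑ i, (∑ j, U i j * v j) * (![-(v 1), v 0]) i = 0) →
      (∃ μ : ℝ, (fun i => ∑ j, U i j * (![-(v 1), v 0]) j) = μ • ![-(v 1), v 0]) := by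
    intro h
    simp only [Fin.sum_univ_two, h10, h11, Matrix.cons_val_zero, Matrix.cons_val_one] at h
    refine ⟨(U 0 0 * (v 1 ^ 2 - v 0 ^ 2) - 2 * U 0 1 * v 0 * v 1) / (v 0 ^ 2 + v 1 ^ 2), ?_⟩
    have hN' := hN.ne'
    funext i
    fin_cases i
    · simp [Fin.sum_univ_two]
      field_simp
      linear_combination v 0 * h
    · simp [Fin.sum_univ_two, h10, h11]
      field_simp
      linear_combination v 1 * h
  have hC : (∃ μ : ℝ, (fun i => ∑ j, U i j * (![-(v 1), v 0]) j) = μ • ![-(v 1), v 0]) →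
      (v, (⟨U, hs, ht⟩ : S0 2)) ∈ Lam 2 := by
    rintro ⟨μ, h⟩
    refine ⟨hv, -μ, ![-(v 1), v 0], ?_, ?_, ?_⟩
    · intro h0
      have a0 := congrFun h0 0
      have a1 := congrFun h0 1
      simp at a0 a1
      rw [a0, a1] at hN
      norm_num at hN
    · intro i
      have := congrFun h i
      simp only [Pi.smul_apply, smul_eq_mul] at this
      rw [neg_mul, ← this]
      exact add_neg_cancel _
    · simp [Fin.sum_univ_two]
      ring
  exact ⟨⟨hA, fun h => hC (hB h)⟩, ⟨fun h => hB (hA h), hC⟩⟩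
end
end

section
/- Let d = 2 and r > 0. Identify (v, U) ∈ ℝ² × S₀^{2×2} with (z, ζ) ∈ ℂ × ℂ via z = v₁ + i v₂ and ζ = U₁₁ + i U₁₂. Define f_r(a + ib, c) := √r·|a|/(r/2 + c) + √r·|b|/(r/2 − c) for a, b ∈ ℝ and |c| < r/2, and 𝒱_r := {(z e^{iθ}, c e^{2iθ}) ∈ ℂ × ℂ : z ∈ ℂ, c ∈ ℝ, f_r(z, c) < 1, 0 < |c| < r/2, θ ∈ ℝ}. Let 𝒱_r^lc := ∪_{i≥0} 𝒱^{(i)} be the lamination convex hull of 𝒱_r with respect to Λ, where 𝒱^{(0)} = 𝒱_r and 𝒱^{(i+1)} := 𝒱^{(i)} ∪ {tξ + (1−t)ξ' : ξ, ξ' ∈ 𝒱^{(i)}, ξ − ξ' ∈ Λ, t ∈ [0,1]}, with Λ = {(z, ζ) ∈ (ℂ∖{0}) × ℂ : Im(z²·conj(ζ)) = 0} the wave cone in complex coordinates. Then the zero state (0, 0) belongs to 𝒱_r^lc. -/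
noncomputable section

/-- The function `f_r(a + ib, c) = √r·|a|/(r/2 + c) + √r·|b|/(r/2 − c)`. -/
def fr (r : ℝ) (z : ℂ) (c : ℝ) : ℝ :=
  Real.sqrt r * |z.re| / (r / 2 + c) + Real.sqrt r * |z.im| / (r / 2 - c)

/-- The set `𝒱_r = {(z e^{iθ}, c e^{2iθ}) : f_r(z, c) < 1, 0 < |c| < r/2, θ ∈ ℝ}`
in the complex coordinates `(z, ζ) ∈ ℂ × ℂ`. -/
def Vset (r : ℝ) : Set (ℂ × ℂ) :=
  {p | ∃ (z : ℂ) (c θ : ℝ), fr r z c < 1 ∧ 0 < |c| ∧ |c| < r / 2 ∧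
    p = (z * Complex.exp (θ * Complex.I), (c : ℂ) * Complex.exp (2 * θ * Complex.I))}

/-- The wave cone in complex coordinates: `Λ = {(z, ζ) : z ≠ 0, Im(z²·conj ζ) = 0}`. -/
def cLam : Set (ℂ × ℂ) := {p | p.1 ≠ 0 ∧ (p.1 ^ 2 * (starRingEnd ℂ) p.2).im = 0}

/-- The iterates `𝒰^{(i)}` of the lamination convex hull construction with respect to a
cone `L`: `𝒰^{(0)} = S` and
`𝒰^{(i+1)} = 𝒰^{(i)} ∪ {tξ + (1−t)ξ' : ξ, ξ' ∈ 𝒰^{(i)}, ξ − ξ' ∈ L, t ∈ [0,1]}`. -/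
def lamIter (L S : Set (ℂ × ℂ)) : ℕ → Set (ℂ × ℂ)
  | 0 => S
  | (i + 1) => lamIter L S i ∪
      {p | ∃ ξ ξ' : ℂ × ℂ, ∃ t : ℝ, ξ ∈ lamIter L S i ∧ ξ' ∈ lamIter L S i ∧
        ξ - ξ' ∈ L ∧ t ∈ Set.Icc (0 : ℝ) 1 ∧ p = t • ξ + (1 - t) • ξ'}

/-- The lamination convex hull `S^lc = ∪_i 𝒰^{(i)}` with respect to the cone `L`. -/
def lamHull (L S : Set (ℂ × ℂ)) : Set (ℂ × ℂ) := ⋃ i, lamIter L S i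

/-- Let `d = 2` and `r > 0`. The zero state `(0,0)` belongs to the
lamination convex hull (with respect to the wave cone `Λ` in complex coordinates) of the
set `𝒱_r`. -/
theorem stmt16 (r : ℝ) (hr : 0 < r) :
    ((0, 0) : ℂ × ℂ) ∈ lamHull cLam (Vset r) := by
  have hs : 0 < Real.sqrt r := Real.sqrt_pos.mpr hr
  have hss : Real.sqrt r * Real.sqrt r = r := Real.mul_self_sqrt hr.le
  have h1 : (((Real.sqrt r / 8 : ℝ) : ℂ), ((r / 4 : ℝ) : ℂ)) ∈ Vset r := by
    refine ⟨((Real.sqrt r / 8 : ℝ) : ℂ), r / 4, 0, ?_, ?_, ?_, ?_⟩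
    · unfold fr
      rw [Complex.ofReal_re, Complex.ofReal_im, abs_of_pos (by positivity : 0 < Real.sqrt r / 8),
        abs_zero, mul_zero, zero_div, add_zero, div_lt_one (by positivity)]
      linarith
    · positivity
    · rw [abs_of_pos (by positivity)]; linarith
    · simp
  have h2 : (((-(Real.sqrt r / 8) : ℝ) : ℂ), ((-(r / 4) : ℝ) : ℂ)) ∈ Vset r := by
    refine ⟨((-(Real.sqrt r / 8) : ℝ) : ℂ), -(r / 4), 0, ?_, ?_, ?_, ?_⟩
    · unfold fr
      rw [Complex.ofReal_re, Complex.ofReal_im, abs_neg,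
        abs_of_pos (by positivity : 0 < Real.sqrt r / 8),
        abs_zero, mul_zero, zero_div, add_zero, div_lt_one (by linarith)]
      linarith
    · rw [abs_neg]; positivity
    · rw [abs_neg, abs_of_pos (by positivity)]; linarith
    · simp
  refine Set.mem_iUnion.mpr ⟨1, Or.inr ⟨_, _, 1 / 2, h1, h2, ⟨?_, ?_⟩, by norm_num, ?_⟩⟩
  · simp only [Prod.mk_sub_mk, ← Complex.ofReal_sub]
    exact Complex.ofReal_ne_zero.mpr (by linarith)
  · simp only [Prod.mk_sub_mk, ← Complex.ofReal_sub, Complex.conj_ofReal, ← Complex.ofReal_pow,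
      ← Complex.ofReal_mul, Complex.ofReal_im]
  · ext <;> simp <;> ring
end
end

section
/- Let d = 2, let B be a fixed real 2×2 matrix, let r > 0 and let Q = (0,1)² be the open unit square. Let 𝒰_r := 𝒱_r^lc be the lamination convex hull (with respect to the wave cone Λ) of the set 𝒱_r defined in complex coordinates by 𝒱_r := {(z e^{iθ}, c e^{2iθ}) : f_r(z, c) < 1, 0 < |c| < r/2, θ ∈ ℝ}, where f_r(a + ib, c) = √r·|a|/(r/2 + c) + √r·|b|/(r/2 − c). Then: (i) there exists a strictly increasing function Φ : [0,∞) → [0,∞) with Φ(0) = 0 such that for every w̄ = (v̄, Ū) ∈ 𝒰_r there exist w = (v, U) ∈ C_c^∞(Q; ℝ² × S₀^{2×2}) and q ∈ C_c^∞(Q) with div U + ∇q = Bv and div v = 0 on ℝ², satisfying w̄ + w(x) ∈ 𝒰_r for all x ∈ Q, ∫_Q |w(x)|² dx ≥ Φ(dist(w̄, K_r)), and ∫_Q w(x) dx = 0; (ii) K_r ⊂ 𝒰_{r'} whenever 0 < r < r'. -/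
open MeasureTheory

noncomputable section

/-- The identification of `ℝ² × S₀^{2×2}` with `ℂ × ℂ`:
`z = v₁ + i v₂`, `ζ = U₁₁ + i U₁₂`. -/
def toC (w : Vec 2 × S0 2) : ℂ × ℂ :=
  (((w.1 0 : ℝ) : ℂ) + ((w.1 1 : ℝ) : ℂ) * Complex.I,
   (((w.2 : Mat 2) 0 0 : ℝ) : ℂ) + (((w.2 : Mat 2) 0 1 : ℝ) : ℂ) * Complex.I)

/-- The relaxed set `𝒰_r = 𝒱_r^lc`, read back in the real coordinates
`ℝ² × S₀^{2×2}` via the identification `toC`. -/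
def Uset (r : ℝ) : Set (Vec 2 × S0 2) := {w | toC w ∈ lamHull cLam (Vset r)}

/-- The open unit square Q = (0,1)². -/
def unitSquare : Set (Vec 2) := {x | ∀ i, x i ∈ Set.Ioo (0 : ℝ) 1}


/-- smooth functions -/
abbrev Sm {E : Type*} [NormedAddCommGroup E] [NormedSpace ℝ E] (f : E → ℝ) : Prop :=
  ContDiff ℝ ((⊤ : ℕ∞) : WithTop ℕ∞) f

theorem Sm.diff {E : Type*} [NormedAddCommGroup E] [NormedSpace ℝ E] {f : E → ℝ} (h : Sm f) :
    Differentiable ℝ f :=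
  ContDiff.differentiable h (by simp)

theorem Sm.pd {f : Vec 2 → ℝ} (h : Sm f) (i : Fin 2) : Sm (_root_.pd i f) := by
  have h1 : ContDiff ℝ ((⊤ : ℕ∞) : WithTop ℕ∞) (fderiv ℝ f) := ContDiff.fderiv_right h (by simp)
  exact h1.clm_apply contDiff_const

theorem pd_add {f g : Vec 2 → ℝ} (hf : Sm f) (hg : Sm g) (i : Fin 2) :
    pd i (fun x => f x + g x) = fun x => pd i f x + pd i g x := by
  funext x
  simp only [pd]
  rw [fderiv_fun_add (hf.diff x) (hg.diff x)]; rfl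

theorem pd_sub {f g : Vec 2 → ℝ} (hf : Sm f) (hg : Sm g) (i : Fin 2) :
    pd i (fun x => f x - g x) = fun x => pd i f x - pd i g x := by
  funext x
  simp only [pd]
  rw [fderiv_fun_sub (hf.diff x) (hg.diff x)]; rfl

theorem pd_neg {f : Vec 2 → ℝ} (i : Fin 2) :
    pd i (fun x => - f x) = fun x => - pd i f x := by
  funext x
  simp only [pd]
  rw [fderiv_fun_neg]; rfl

theorem pd_cmul {f : Vec 2 → ℝ} (hf : Sm f) (c : ℝ) (i : Fin 2) :
    pd i (fun x => c * f x) = fun x => c * pd i f x := by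
  funext x
  simp only [pd]
  rw [fderiv_const_mul (hf.diff x)]; rfl

theorem pd_mul {f g : Vec 2 → ℝ} (hf : Sm f) (hg : Sm g) (i : Fin 2) :
    pd i (fun x => f x * g x) = fun x => pd i f x * g x + f x * pd i g x := by
  funext x
  simp only [pd]
  rw [fderiv_fun_mul (hf.diff x) (hg.diff x)]
  simp; ring

theorem pd_sum {ι : Type*} (s : Finset ι) {f : ι → Vec 2 → ℝ} (hf : ∀ k, Sm (f k)) (i : Fin 2) :
    pd i (fun x => ∑ k ∈ s, f k x) = fun x => ∑ k ∈ s, pd i (f k) x := by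
  funext x
  simp only [pd]
  rw [fderiv_fun_sum (fun k _ => (hf k).diff x)]
  simp

theorem pd_comm {f : Vec 2 → ℝ} (hf : Sm f) (i j : Fin 2) : pd i (pd j f) = pd j (pd i f) := by
  funext x
  have hs : IsSymmSndFDerivAt ℝ f x := by
    apply ContDiffAt.isSymmSndFDerivAt (n := ((⊤ : ℕ∞) : WithTop ℕ∞)) hf.contDiffAt
    simp only [minSmoothness_of_isRCLikeNormedField]
    exact WithTop.coe_le_coe.2 (le_top : (2 : ℕ∞) ≤ ⊤)
  have h1 : DifferentiableAt ℝ (fderiv ℝ f) x :=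
    (ContDiff.differentiable (ContDiff.fderiv_right (m := ((⊤ : ℕ∞) : WithTop ℕ∞)) hf (by simp))
      (by simp)) x
  have key : ∀ a b : Fin 2, pd a (pd b f) x =
      fderiv ℝ (fderiv ℝ f) x (Pi.single a 1) (Pi.single b 1) := by
    intro a b
    unfold pd
    rw [fderiv_clm_apply h1 (differentiableAt_const _)]
    simp
  rw [key, key]
  exact hs _ _

/-- affine rescaling -/
theorem Sm.sc {f : Vec 2 → ℝ} (hf : Sm f) (M : ℝ) (k : Vec 2) : Sm (fun x => f (M • x - k)) := by
  exact ContDiff.comp hf (by fun_prop)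

theorem pd_sc {f : Vec 2 → ℝ} (hf : Sm f) (M : ℝ) (k : Vec 2) (i : Fin 2) :
    pd i (fun x => f (M • x - k)) = fun x => M * pd i f (M • x - k) := by
  funext x
  have h1 : HasFDerivAt (fun x : Vec 2 => M • x - k) (M • ContinuousLinearMap.id ℝ (Vec 2)) x := by
    exact ((hasFDerivAt_id x).const_smul M).sub_const k
  have h2 := ((hf.diff (M • x - k)).hasFDerivAt).comp x h1
  simp only [pd]
  have h3 := h2.fderiv
  simp only [Function.comp_def] at h3
  rw [h3]
  simp

theorem pd_ins {ι : Type*} (s : Finset ι) {f0 : Vec 2 → ℝ} {f : ι → Vec 2 → ℝ} (h0 : Sm f0)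
    (hf : ∀ k, Sm (f k)) (c M : ℝ) (κ : ι → Vec 2) (i : Fin 2) :
    pd i (fun x => f0 x + ∑ k ∈ s, c * f k (M • x - κ k)) =
      fun x => pd i f0 x + ∑ k ∈ s, (c * M) * pd i (f k) (M • x - κ k) := by
  rw [pd_add h0, pd_sum]
  · funext x
    congr 1
    refine Finset.sum_congr rfl fun k _ => ?_
    rw [pd_cmul ((hf k).sc M (κ k)), pd_sc (hf k)]
    ring
  · intro k
    exact contDiff_const.mul ((hf k).sc _ _)
  · exact ContDiff.sum fun k _ => contDiff_const.mul ((hf k).sc _ _)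

/-- test functions on the open unit square -/
structure Tst (f : Vec 2 → ℝ) : Prop where
  sm : Sm f
  cs : HasCompactSupport f
  sub : tsupport f ⊆ unitSquare

theorem pd_support (f : Vec 2 → ℝ) (i : Fin 2) : tsupport (pd i f) ⊆ tsupport f := by
  refine closure_minimal ?_ (isClosed_tsupport f)
  intro x hx
  apply support_fderiv_subset ℝ (f := f)
  intro h
  apply hx
  simp [pd, h]

theorem tst_of_sub {f g : Vec 2 → ℝ} (hg : Sm g) (hf : Tst f) (h : tsupport g ⊆ tsupport f) :
    Tst g := ⟨hg, hf.cs.of_isClosed_subset (isClosed_tsupport g) h, h.trans hf.sub⟩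

theorem Tst.pd {f : Vec 2 → ℝ} (hf : Tst f) (i : Fin 2) : Tst (_root_.pd i f) :=
  tst_of_sub (hf.sm.pd i) hf (pd_support f i)

theorem Tst.add {f g : Vec 2 → ℝ} (hf : Tst f) (hg : Tst g) : Tst (fun x => f x + g x) :=
  ⟨ContDiff.add hf.sm hg.sm, hf.cs.add hg.cs,
    (tsupport_add f g).trans (Set.union_subset hf.sub hg.sub)⟩

theorem Tst.mul_left {f g : Vec 2 → ℝ} (hg : Sm g) (hf : Tst f) : Tst (fun x => g x * f x) := by
  refine tst_of_sub (ContDiff.mul hg hf.sm) hf ?_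
  exact tsupport_mul_subset_right (f := g) (g := f)

theorem Tst.cmul {f : Vec 2 → ℝ} (hf : Tst f) (c : ℝ) : Tst (fun x => c * f x) :=
  Tst.mul_left contDiff_const hf

theorem tst_zero : Tst (fun _ => (0 : ℝ)) := by
  refine ⟨contDiff_const, HasCompactSupport.zero, ?_⟩
  have : tsupport (fun _ : Vec 2 => (0 : ℝ)) = ∅ := by
    rw [tsupport_eq_empty_iff]; rfl
  rw [this]; simp

theorem Tst.sum {ι : Type*} (s : Finset ι) {f : ι → Vec 2 → ℝ} (hf : ∀ k, Tst (f k)) :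
    Tst (fun x => ∑ k ∈ s, f k x) := by
  classical
  induction s using Finset.induction_on with
  | empty => simpa using tst_zero
  | insert a s ha ih =>
    simp only [Finset.sum_insert ha]
    exact (hf a).add ih

theorem Tst.zero_off {f : Vec 2 → ℝ} (hf : Tst f) {x : Vec 2} (hx : x ∉ unitSquare) : f x = 0 := by
  by_contra h
  exact hx (hf.sub (subset_tsupport f h))

theorem Tst.sc {f : Vec 2 → ℝ} (hf : Tst f) {M : ℕ} (hM : 0 < M) (k : Fin 2 → Fin M) :
    Tst (fun x => f ((M : ℝ) • x - fun i => ((k i : ℕ) : ℝ))) := by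
  have hM' : (0 : ℝ) < M := by exact_mod_cast hM
  set κ : Vec 2 := fun i => ((k i : ℕ) : ℝ) with hκ
  let e : Vec 2 ≃ₜ Vec 2 := (Homeomorph.smulOfNeZero (M : ℝ) hM'.ne').trans (Homeomorph.subRight κ)
  have he : (fun x => f ((M : ℝ) • x - κ)) = f ∘ e := by
    funext x; rfl
  refine ⟨hf.sm.sc _ _, ?_, ?_⟩
  · rw [he]; exact hf.cs.comp_homeomorph e
  · rw [he, tsupport_comp_eq_preimage]
    intro x hx i
    have h1 := hf.sub hx i
    have h2 : e x i = M * x i - (k i : ℕ) := by simp [e, hκ]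
    rw [h2] at h1
    have h3 : ((k i : ℕ) : ℝ) + 1 ≤ M := by exact_mod_cast (k i).2
    have h4 : (0 : ℝ) ≤ ((k i : ℕ) : ℝ) := by positivity
    constructor
    · by_contra h; push Not at h; nlinarith [h1.1]
    · by_contra h; push Not at h; nlinarith [h1.2]

theorem Tst.integrable {f : Vec 2 → ℝ} (hf : Tst f) : Integrable f :=
  hf.sm.continuous.integrable_of_hasCompactSupport hf.cs

theorem Tst.integral_pd {f : Vec 2 → ℝ} (hf : Tst f) (i : Fin 2) : ∫ x, _root_.pd i f x = 0 := by
  have := integral_mul_fderiv_eq_neg_fderiv_mul_of_integrable (𝕜 := ℝ) (μ := (volume : Measure (Vec 2)))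
    (f := fun _ => (1 : ℝ)) (g := f) (v := Pi.single i 1) (by simp) 
    (by simp only [one_mul]; exact (hf.pd i).integrable) (by simpa using hf.integrable) (by simp) 
    (fun x _ => hf.sm.diff x)
  simpa [_root_.pd] using this

theorem Tst.bdd {f : Vec 2 → ℝ} (hf : Tst f) : ∃ C, ∀ x, |f x| ≤ C := by
  obtain ⟨C, hC⟩ := hf.cs.exists_bound_of_continuous hf.sm.continuous
  exact ⟨C, fun x => by simpa using hC x⟩

theorem Tst.integral_sq {f : Vec 2 → ℝ} (hf : Tst f) : ∫ x in unitSquare, f x = ∫ x, f x :=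
  setIntegral_eq_integral_of_forall_compl_eq_zero fun _ hx => hf.zero_off hx


/-- the state generated by the two potentials (case `B = 0`) -/
def Wst (φ χ : Vec 2 → ℝ) (x : Vec 2) : ℂ × ℂ :=
  (⟨-(pd 1 (pd 0 (pd 0 φ)) x + pd 1 (pd 1 (pd 1 φ)) x),
    pd 0 (pd 0 (pd 0 φ)) x + pd 0 (pd 1 (pd 1 φ)) x⟩,
   ⟨(pd 1 (pd 1 χ) x - pd 0 (pd 0 χ) x) / 2, -pd 0 (pd 1 χ) x⟩)

theorem pd2_ins {ι : Type*} (s : Finset ι) {f0 : Vec 2 → ℝ} {f : ι → Vec 2 → ℝ} (h0 : Sm f0)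
    (hf : ∀ k, Sm (f k)) (c M : ℝ) (κ : ι → Vec 2) (i j : Fin 2) :
    pd i (pd j (fun x => f0 x + ∑ k ∈ s, c * f k (M • x - κ k))) =
      fun x => pd i (pd j f0) x + ∑ k ∈ s, (c * M * M) * pd i (pd j (f k)) (M • x - κ k) := by
  rw [pd_ins s h0 hf, pd_ins s (h0.pd j) (fun k => (hf k).pd j)]

theorem pd3_ins {ι : Type*} (s : Finset ι) {f0 : Vec 2 → ℝ} {f : ι → Vec 2 → ℝ} (h0 : Sm f0)
    (hf : ∀ k, Sm (f k)) (c M : ℝ) (κ : ι → Vec 2) (i j l : Fin 2) :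
    pd i (pd j (pd l (fun x => f0 x + ∑ k ∈ s, c * f k (M • x - κ k)))) =
      fun x => pd i (pd j (pd l f0)) x +
        ∑ k ∈ s, (c * M * M * M) * pd i (pd j (pd l (f k))) (M • x - κ k) := by
  rw [pd_ins s h0 hf, pd_ins s (h0.pd l) (fun k => (hf k).pd l),
    pd_ins s ((h0.pd l).pd j) (fun k => ((hf k).pd l).pd j)]

theorem Wst_ins {ι : Type*} (s : Finset ι) {φ0 χ0 : Vec 2 → ℝ} {φ χ : ι → Vec 2 → ℝ} (h0 : Sm φ0)
    (h0' : Sm χ0) (hf : ∀ k, Sm (φ k)) (hf' : ∀ k, Sm (χ k)) {M : ℝ} (hM : M ≠ 0)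
    (κ : ι → Vec 2) (x : Vec 2) :
    Wst (fun x => φ0 x + ∑ k ∈ s, (M ^ 3)⁻¹ * φ k (M • x - κ k))
      (fun x => χ0 x + ∑ k ∈ s, (M ^ 2)⁻¹ * χ k (M • x - κ k)) x =
    Wst φ0 χ0 x + ∑ k ∈ s, Wst (φ k) (χ k) (M • x - κ k) := by
  have e3 : (M ^ 3)⁻¹ * M * M * M = 1 := by field_simp
  have e2 : (M ^ 2)⁻¹ * M * M = 1 := by field_simp
  unfold Wst
  simp only [pd2_ins s h0' hf', pd3_ins s h0 hf, e3, e2, one_mul]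
  refine Prod.ext ?_ ?_
  · simp only [Prod.fst_add, Prod.fst_sum]
    apply Complex.ext
    · simp only [Complex.add_re, Complex.re_sum, Finset.sum_neg_distrib, Finset.sum_add_distrib]
      ring
    · simp only [Complex.add_im, Complex.im_sum, Finset.sum_add_distrib]
      ring
  · simp only [Prod.snd_add, Prod.snd_sum]
    apply Complex.ext
    · simp only [Complex.add_re, Complex.re_sum, ← Finset.sum_div, Finset.sum_sub_distrib]
      ring
    · simp only [Complex.add_im, Complex.im_sum, Finset.sum_neg_distrib]
      ring

theorem Wst_zero_off {φ χ : Vec 2 → ℝ} (h : Tst φ) (h' : Tst χ) {x : Vec 2}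
    (hx : x ∉ unitSquare) : Wst φ χ x = 0 := by
  unfold Wst
  rw [(((h.pd 0).pd 0).pd 1).zero_off hx, (((h.pd 1).pd 1).pd 1).zero_off hx,
    (((h.pd 0).pd 0).pd 0).zero_off hx, (((h.pd 1).pd 1).pd 0).zero_off hx,
    ((h'.pd 1).pd 1).zero_off hx, ((h'.pd 0).pd 0).zero_off hx, ((h'.pd 1).pd 0).zero_off hx]
  refine Prod.ext ?_ ?_ <;> apply Complex.ext <;> simp

theorem Wst_cont {φ χ : Vec 2 → ℝ} (h : Sm φ) (h' : Sm χ) : Continuous (Wst φ χ) := by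
  have e : Wst φ χ = fun x =>
    (((-(pd 1 (pd 0 (pd 0 φ)) x + pd 1 (pd 1 (pd 1 φ)) x) : ℝ) +
      (pd 0 (pd 0 (pd 0 φ)) x + pd 0 (pd 1 (pd 1 φ)) x : ℝ) * Complex.I : ℂ),
    (((pd 1 (pd 1 χ) x - pd 0 (pd 0 χ) x) / 2 : ℝ) + (-pd 0 (pd 1 χ) x : ℝ) * Complex.I : ℂ)) := by
    funext x
    unfold Wst
    refine Prod.ext ?_ ?_ <;> apply Complex.ext <;> simp
  rw [e]
  have c1 := (((h.pd 0).pd 0).pd 1).continuous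
  have c2 := (((h.pd 1).pd 1).pd 1).continuous
  have c3 := (((h.pd 0).pd 0).pd 0).continuous
  have c4 := (((h.pd 1).pd 1).pd 0).continuous
  have c5 := ((h'.pd 1).pd 1).continuous
  have c6 := ((h'.pd 0).pd 0).continuous
  have c7 := ((h'.pd 1).pd 0).continuous
  fun_prop

/-- plane wave with amplitude -/
def pw (n : Fin 2 → ℝ) (N s : ℝ) (a : ℝ → ℝ) (g : Vec 2 → ℝ) (x : Vec 2) : ℝ :=
  a (N * (n 0 * x 0 + n 1 * x 1) + s) * g x

theorem Sm.dv {a : ℝ → ℝ} (ha : Sm a) : Sm (deriv a) := by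
  have := (contDiff_infty_iff_deriv.1 ha).2
  exact this

theorem phase_sm (n : Fin 2 → ℝ) (N s : ℝ) :
    Sm (fun x : Vec 2 => N * (n 0 * x 0 + n 1 * x 1) + s) := by
  unfold Sm
  fun_prop

theorem pw_sm {n : Fin 2 → ℝ} {N s : ℝ} {a : ℝ → ℝ} {g : Vec 2 → ℝ} (ha : Sm a) (hg : Sm g) :
    Sm (pw n N s a g) :=
  ContDiff.mul (ContDiff.comp ha (phase_sm n N s)) hg

theorem pd_pw {n : Fin 2 → ℝ} {N s : ℝ} {a : ℝ → ℝ} {g : Vec 2 → ℝ} (ha : Sm a) (hg : Sm g)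
    (i : Fin 2) : pd i (pw n N s a g) =
      fun x => (N * n i) * pw n N s (deriv a) g x + pw n N s a (pd i g) x := by
  have h0 : Sm (fun x : Vec 2 => a (N * (n 0 * x 0 + n 1 * x 1) + s)) :=
    ContDiff.comp ha (phase_sm n N s)
  unfold pw
  rw [pd_mul h0 hg]
  funext x
  have h1 : HasFDerivAt (fun x : Vec 2 => N * (n 0 * x 0 + n 1 * x 1) + s)
      (N • (n 0 • ContinuousLinearMap.proj (R := ℝ) (φ := fun _ : Fin 2 => ℝ) 0 +
        n 1 • ContinuousLinearMap.proj (R := ℝ) (φ := fun _ : Fin 2 => ℝ) 1)) x := by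
    refine HasFDerivAt.add_const s (HasFDerivAt.const_mul (HasFDerivAt.add ?_ ?_) N)
    · exact (hasFDerivAt_apply 0 x).const_mul (n 0)
    · exact (hasFDerivAt_apply 1 x).const_mul (n 1)
  have h2 := (ha.diff (N * (n 0 * x 0 + n 1 * x 1) + s)).hasDerivAt.comp_hasFDerivAt x h1
  have h3 : pd i (fun x : Vec 2 => a (N * (n 0 * x 0 + n 1 * x 1) + s)) x =
      deriv a (N * (n 0 * x 0 + n 1 * x 1) + s) * (N * n i) := by
    unfold pd
    have := h2.fderiv
    simp only [Function.comp_def] at this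
    rw [this]
    fin_cases i <;> simp
  rw [h3]; ring

theorem pd2_pw {n : Fin 2 → ℝ} {N s : ℝ} {a : ℝ → ℝ} {g : Vec 2 → ℝ} (ha : Sm a) (hg : Sm g)
    (i j : Fin 2) : pd i (pd j (pw n N s a g)) =
      fun x => (N * n j) * ((N * n i) * pw n N s (deriv (deriv a)) g x
        + pw n N s (deriv a) (pd i g) x) + ((N * n i) * pw n N s (deriv a) (pd j g) x
        + pw n N s a (pd i (pd j g)) x) := by
  rw [pd_pw ha hg, pd_add (contDiff_const.mul (pw_sm ha.dv hg)) (pw_sm ha (hg.pd j)),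
    pd_cmul (pw_sm ha.dv hg), pd_pw ha.dv hg, pd_pw ha (hg.pd j)]

theorem pd3_pw {n : Fin 2 → ℝ} {N s : ℝ} {a : ℝ → ℝ} {g : Vec 2 → ℝ} (ha : Sm a) (hg : Sm g)
    (i j l : Fin 2) : pd i (pd j (pd l (pw n N s a g))) =
      fun x => (N * n l) * pd i (pd j (pw n N s (deriv a) g)) x +
        pd i (pd j (pw n N s a (pd l g))) x := by
  have s1 : Sm (pw n N s (deriv a) g) := pw_sm ha.dv hg
  have s2 : Sm (pw n N s a (pd l g)) := pw_sm ha (hg.pd l)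
  rw [pd_pw ha hg, pd_add (contDiff_const.mul s1) s2, pd_cmul s1,
    pd_add (contDiff_const.mul (s1.pd j)) (s2.pd j), pd_cmul (s1.pd j)]

theorem pw_bound2 {a : ℝ → ℝ} {g : Vec 2 → ℝ} (n : Fin 2 → ℝ) (ha : Sm a) (hg : Tst g)
    (hb : ∃ A, ∀ u, |a u| ≤ A) (hb1 : ∃ A, ∀ u, |deriv a u| ≤ A) :
    ∃ C, 0 ≤ C ∧ ∀ N : ℝ, 1 ≤ N → ∀ s x i j,
      |pd i (pd j (pw n N s a g)) x - N ^ 2 * (n i * n j) * pw n N s (deriv (deriv a)) g x|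
        ≤ C * N := by
  obtain ⟨A0, hA0⟩ := hb
  obtain ⟨A1, hA1⟩ := hb1
  have hG1 : ∃ G, ∀ i x, |pd i g x| ≤ G := by
    choose G hG using fun i => (hg.pd i).bdd
    refine ⟨max (G 0) (G 1), fun i x => ?_⟩
    fin_cases i
    · exact (hG 0 x).trans (le_max_left _ _)
    · exact (hG 1 x).trans (le_max_right _ _)
  have hG2 : ∃ G, ∀ i j x, |pd i (pd j g) x| ≤ G := by
    choose G hG using fun (k : Fin 2 × Fin 2) => ((hg.pd k.2).pd k.1).bdd
    refine ⟨∑ k, |G k|, fun i j x => ?_⟩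
    refine ((hG (i, j) x).trans (le_abs_self _)).trans ?_
    exact Finset.single_le_sum (f := fun k => |G k|) (fun k _ => abs_nonneg _) (Finset.mem_univ _)
  obtain ⟨G1, hG1⟩ := hG1
  obtain ⟨G2, hG2⟩ := hG2
  have A0n : 0 ≤ A0 := (abs_nonneg _).trans (hA0 0)
  have A1n : 0 ≤ A1 := (abs_nonneg _).trans (hA1 0)
  have G1n : 0 ≤ G1 := (abs_nonneg _).trans (hG1 0 0)
  have G2n : 0 ≤ G2 := (abs_nonneg _).trans (hG2 0 0 0)
  set m := |n 0| + |n 1| with hm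
  have hni : ∀ i, |n i| ≤ m := by
    intro i; fin_cases i
    · simp [hm]
    · simp [hm]
  have mn : 0 ≤ m := (abs_nonneg _).trans (hni 0)
  refine ⟨2 * (m * (A1 * G1)) + A0 * G2, by positivity, fun N hN s x i j => ?_⟩
  rw [pd2_pw ha hg.sm]
  have b1 : ∀ k, |pw n N s (deriv a) (pd k g) x| ≤ A1 * G1 := fun k => by
    unfold pw; rw [abs_mul]; exact mul_le_mul (hA1 _) (hG1 _ _) (abs_nonneg _) A1n
  have b2 : |pw n N s a (pd i (pd j g)) x| ≤ A0 * G2 := by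
    unfold pw; rw [abs_mul]; exact mul_le_mul (hA0 _) (hG2 _ _ _) (abs_nonneg _) A0n
  have c1 : ∀ k l, |(N * n l) * pw n N s (deriv a) (pd k g) x| ≤ N * (m * (A1 * G1)) := fun k l => by
    rw [abs_mul, abs_mul, abs_of_nonneg (by linarith : (0:ℝ) ≤ N), mul_assoc]
    exact mul_le_mul_of_nonneg_left (mul_le_mul (hni l) (b1 k) (abs_nonneg _) mn) (by linarith)
  have e : (N * n j) * ((N * n i) * pw n N s (deriv (deriv a)) g x
        + pw n N s (deriv a) (pd i g) x) + ((N * n i) * pw n N s (deriv a) (pd j g) x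
        + pw n N s a (pd i (pd j g)) x) - N ^ 2 * (n i * n j) * pw n N s (deriv (deriv a)) g x
      = (N * n j) * pw n N s (deriv a) (pd i g) x + (N * n i) * pw n N s (deriv a) (pd j g) x
        + pw n N s a (pd i (pd j g)) x := by ring
  rw [e]
  have t := abs_add_three ((N * n j) * pw n N s (deriv a) (pd i g) x)
    ((N * n i) * pw n N s (deriv a) (pd j g) x) (pw n N s a (pd i (pd j g)) x)
  have := c1 i j
  have := c1 j i
  nlinarith [mul_nonneg A0n G2n]

theorem pw_bound {a : ℝ → ℝ} {g : Vec 2 → ℝ} (n : Fin 2 → ℝ) (ha : Sm a) (hg : Tst g)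
    (hb : ∃ A, ∀ u, |a u| ≤ A) (hb1 : ∃ A, ∀ u, |deriv a u| ≤ A)
    (hb2 : ∃ A, ∀ u, |deriv (deriv a) u| ≤ A) :
    ∃ C, 0 ≤ C ∧ ∀ N : ℝ, 1 ≤ N → ∀ s x i j,
      |pd i (pd j (pw n N s a g)) x| ≤ C * N ^ 2 := by
  obtain ⟨C, hC, h⟩ := pw_bound2 n ha hg hb hb1
  obtain ⟨A, hA⟩ := hb2
  obtain ⟨G, hG⟩ := hg.bdd
  have An : 0 ≤ A := (abs_nonneg _).trans (hA 0)
  have Gn : 0 ≤ G := (abs_nonneg _).trans (hG 0)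
  refine ⟨C + (|n 0| + |n 1|) ^ 2 * (A * G), by positivity, fun N hN s x i j => ?_⟩
  have h1 := h N hN s x i j
  have b1 : |pw n N s (deriv (deriv a)) g x| ≤ A * G := by
    unfold pw; rw [abs_mul]; exact mul_le_mul (hA _) (hG _) (abs_nonneg _) An
  have hni : ∀ i, |n i| ≤ |n 0| + |n 1| := by
    intro i; fin_cases i <;> simp
  have b2 : |N ^ 2 * (n i * n j) * pw n N s (deriv (deriv a)) g x| ≤
      N ^ 2 * ((|n 0| + |n 1|) ^ 2 * (A * G)) := by
    rw [abs_mul, abs_mul, abs_mul, abs_of_nonneg (by positivity : (0:ℝ) ≤ N ^ 2), mul_assoc]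
    refine mul_le_mul_of_nonneg_left (mul_le_mul ?_ b1 (abs_nonneg _) (by positivity)) (by positivity)
    rw [sq]
    exact mul_le_mul (hni i) (hni j) (abs_nonneg _) (by positivity)
  have t := abs_sub_abs_le_abs_sub (pd i (pd j (pw n N s a g)) x)
    (N ^ 2 * (n i * n j) * pw n N s (deriv (deriv a)) g x)
  have : C * N ≤ C * N ^ 2 := mul_le_mul_of_nonneg_left (by nlinarith) hC
  nlinarith

theorem pw_bound3 {a : ℝ → ℝ} {g : Vec 2 → ℝ} (n : Fin 2 → ℝ) (ha : Sm a) (hg : Tst g)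
    (hb : ∃ A, ∀ u, |a u| ≤ A) (hb1 : ∃ A, ∀ u, |deriv a u| ≤ A)
    (hb2 : ∃ A, ∀ u, |deriv (deriv a) u| ≤ A) :
    ∃ C, 0 ≤ C ∧ ∀ N : ℝ, 1 ≤ N → ∀ s x i j l,
      |pd i (pd j (pd l (pw n N s a g))) x -
        N ^ 3 * (n i * n j * n l) * pw n N s (deriv (deriv (deriv a))) g x|
        ≤ C * N ^ 2 := by
  obtain ⟨C, hC, h⟩ := pw_bound2 n ha.dv hg hb1 hb2
  obtain ⟨C0, hC0, h0⟩ := pw_bound n ha (hg.pd 0) hb hb1 hb2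
  obtain ⟨C1, hC1, h1⟩ := pw_bound n ha (hg.pd 1) hb hb1 hb2
  refine ⟨(|n 0| + |n 1|) * C + (C0 + C1), by positivity, fun N hN s x i j l => ?_⟩
  rw [pd3_pw ha hg.sm]
  have hni : |n l| ≤ |n 0| + |n 1| := by fin_cases l <;> simp
  have b1 : |pd i (pd j (pw n N s a (pd l g))) x| ≤ (C0 + C1) * N ^ 2 := by
    have := mul_nonneg hC0 (sq_nonneg N)
    have := mul_nonneg hC1 (sq_nonneg N)
    fin_cases l
    · have := h0 N hN s x i j
      simp only [Fin.zero_eta, Fin.isValue] at *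
      linarith
    · have := h1 N hN s x i j
      simp only [Fin.mk_one, Fin.isValue] at *
      linarith
  have e : (N * n l) * pd i (pd j (pw n N s (deriv a) g)) x +
        pd i (pd j (pw n N s a (pd l g))) x -
        N ^ 3 * (n i * n j * n l) * pw n N s (deriv (deriv (deriv a))) g x =
      (N * n l) * (pd i (pd j (pw n N s (deriv a) g)) x -
        N ^ 2 * (n i * n j) * pw n N s (deriv (deriv (deriv a))) g x) +
        pd i (pd j (pw n N s a (pd l g))) x := by ring
  rw [e]
  have b2 : |(N * n l) * (pd i (pd j (pw n N s (deriv a) g)) x -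
        N ^ 2 * (n i * n j) * pw n N s (deriv (deriv (deriv a))) g x)| ≤
        (N * (|n 0| + |n 1|)) * (C * N) := by
    rw [abs_mul, abs_mul, abs_of_nonneg (by linarith : (0:ℝ) ≤ N)]
    exact mul_le_mul (mul_le_mul_of_nonneg_left hni (by linarith)) (h N hN s x i j)
      (abs_nonneg _) (by positivity)
  have t := abs_add_le ((N * n l) * (pd i (pd j (pw n N s (deriv a) g)) x -
        N ^ 2 * (n i * n j) * pw n N s (deriv (deriv (deriv a))) g x))
        (pd i (pd j (pw n N s a (pd l g))) x)
  nlinarith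


/-- half-open unit square -/
def Qh : Set (Vec 2) := {x | ∀ i, x i ∈ Set.Ico (0 : ℝ) 1}

theorem Qh_eq : Qh = Set.univ.pi fun _ : Fin 2 => Set.Ico (0 : ℝ) 1 := by
  ext x; simp [Qh]

theorem unitSquare_eq : unitSquare = Set.univ.pi fun _ : Fin 2 => Set.Ioo (0 : ℝ) 1 := by
  ext x; simp [unitSquare]

theorem Qh_meas : MeasurableSet Qh := by
  rw [Qh_eq]; exact MeasurableSet.univ_pi fun _ => measurableSet_Ico

theorem unitSquare_meas : MeasurableSet unitSquare := by
  rw [unitSquare_eq]; exact MeasurableSet.univ_pi fun _ => measurableSet_Ioo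

theorem Qh_ae : (unitSquare : Set (Vec 2)) =ᵐ[volume] Qh := by
  rw [Qh_eq, unitSquare_eq]
  exact (Measure.univ_pi_Ioo_ae_eq_Icc (μ := fun _ : Fin 2 => (volume : Measure ℝ))
    (f := fun _ => (0:ℝ)) (g := fun _ => (1:ℝ))).trans
    (Measure.univ_pi_Ico_ae_eq_Icc (μ := fun _ : Fin 2 => (volume : Measure ℝ))
    (f := fun _ => (0:ℝ)) (g := fun _ => (1:ℝ))).symm

theorem Qh_vol : volume Qh = 1 := by
  rw [Qh_eq, Real.volume_pi_Ico]; simp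

theorem unitSquare_vol : volume unitSquare = 1 := by
  rw [measure_congr Qh_ae, Qh_vol]

theorem Qh_prob : IsProbabilityMeasure ((volume : Measure (Vec 2)).restrict Qh) :=
  ⟨by simp [Qh_vol]⟩

theorem intOn_Qh {f : Vec 2 → ℝ} (hf : Continuous f) : IntegrableOn f Qh := by
  have : IntegrableOn f (Set.Icc (0 : Vec 2) 1) := hf.continuousOn.integrableOn_compact isCompact_Icc
  refine this.mono_set ?_
  intro x hx
  exact ⟨fun i => (hx i).1, fun i => (hx i).2.le⟩

theorem exists_cutoff {δ : ℝ} (hδ : 0 < δ) : ∃ η : Vec 2 → ℝ, Tst η ∧ (∀ x, 0 ≤ η x) ∧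
    (∀ x, η x ≤ 1) ∧ ∫ x in Qh, (1 - η x) ≤ δ := by
  let st := Real.smoothTransition
  let h : ℕ → ℝ → ℝ := fun m u => st (m * u - 1) * st (m * (1 - u) - 1)
  let η : ℕ → Vec 2 → ℝ := fun m x => h m (x 0) * h m (x 1)
  have h0 : ∀ m u, 0 ≤ h m u := fun m u =>
    mul_nonneg (Real.smoothTransition.nonneg _) (Real.smoothTransition.nonneg _)
  have h1 : ∀ m u, h m u ≤ 1 := fun m u =>
    mul_le_one₀ (Real.smoothTransition.le_one _) (Real.smoothTransition.nonneg _)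
      (Real.smoothTransition.le_one _)
  have hsm : ∀ m, Sm (h m) := fun m => by
    have s : ContDiff ℝ ((⊤ : ℕ∞) : WithTop ℕ∞) Real.smoothTransition := Real.smoothTransition.contDiff
    exact (s.comp (by fun_prop)).mul (s.comp (by fun_prop))
  have hz : ∀ m u, h m u ≠ 0 → 1 ≤ m * u ∧ 1 ≤ m * (1 - u) := by
    intro m u hu
    constructor
    · by_contra hc
      exact hu (by simp [h, st, Real.smoothTransition.zero_of_nonpos (by linarith : (m:ℝ) * u - 1 ≤ 0)])
    · by_contra hc
      exact hu (by simp [h, st, Real.smoothTransition.zero_of_nonpos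
        (by linarith : (m:ℝ) * (1 - u) - 1 ≤ 0)])
  have ηsm : ∀ m, Sm (η m) := fun m =>
    (ContDiff.comp (hsm m) (by fun_prop : ContDiff ℝ ((⊤ : ℕ∞) : WithTop ℕ∞) fun x : Vec 2 => x 0)).mul
      (ContDiff.comp (hsm m) (by fun_prop : ContDiff ℝ ((⊤ : ℕ∞) : WithTop ℕ∞) fun x : Vec 2 => x 1))
  have ηsup : ∀ m, tsupport (η m) ⊆ {x | ∀ i, 1 ≤ m * x i ∧ 1 ≤ m * (1 - x i)} := by
    intro m
    refine closure_minimal ?_ ?_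
    · intro x hx i
      have hx' : h m (x 0) ≠ 0 ∧ h m (x 1) ≠ 0 := mul_ne_zero_iff.1 hx
      fin_cases i
      · exact hz m _ hx'.1
      · exact hz m _ hx'.2
    · simp only [Set.ofPred_forall]
      refine isClosed_iInter fun i => ?_
      have c1 : IsClosed {x : Vec 2 | 1 ≤ (m:ℝ) * x i} :=
        isClosed_le continuous_const (by fun_prop)
      have c2 : IsClosed {x : Vec 2 | 1 ≤ (m:ℝ) * (1 - x i)} :=
        isClosed_le continuous_const (by fun_prop)
      exact c1.inter c2
  have ηsub : ∀ m, tsupport (η m) ⊆ unitSquare := by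
    intro m x hx i
    obtain ⟨a, b⟩ := ηsup m hx i
    have : (0:ℝ) ≤ m := by positivity
    constructor
    · by_contra hc; push Not at hc; nlinarith
    · by_contra hc; push Not at hc; nlinarith
  have ηt : ∀ m, Tst (η m) := by
    intro m
    refine ⟨ηsm m, ?_, ηsub m⟩
    refine (isCompact_Icc (a := (0 : Vec 2)) (b := 1)).of_isClosed_subset (isClosed_tsupport _) ?_
    intro x hx
    exact ⟨fun i => (ηsub m hx i).1.le, fun i => (ηsub m hx i).2.le⟩
  have lim : Filter.Tendsto (fun m => ∫ x in unitSquare, (1 - η m x)) Filter.atTop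
      (nhds (∫ _x in unitSquare, (0 : ℝ))) := by
    refine tendsto_integral_of_dominated_convergence (fun _ => (1:ℝ)) ?_ ?_ ?_ ?_
    · intro m
      exact (continuous_const.sub (ηsm m).continuous).aestronglyMeasurable
    · exact integrableOn_const (by simp [unitSquare_vol])
    · intro m
      refine Filter.Eventually.of_forall fun x => ?_
      have a := mul_nonneg (h0 m (x 0)) (h0 m (x 1))
      have b := mul_le_one₀ (h1 m (x 0)) (h0 m (x 1)) (h1 m (x 1))
      rw [Real.norm_eq_abs, abs_le]
      constructor <;> simp only [η] <;> linarith
    · refine (ae_restrict_iff' unitSquare_meas).2 (Filter.Eventually.of_forall fun x hx => ?_)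
      have hev : ∀ i, ∀ᶠ m : ℕ in Filter.atTop, h m (x i) = 1 := by
        intro i
        have p1 := (hx i).1
        have p2 : 0 < 1 - x i := by linarith [(hx i).2]
        have t1 : ∀ᶠ m : ℕ in Filter.atTop, 2 ≤ (m:ℝ) * x i :=
          (tendsto_natCast_atTop_atTop.atTop_mul_const p1).eventually_ge_atTop 2
        have t2 : ∀ᶠ m : ℕ in Filter.atTop, 2 ≤ (m:ℝ) * (1 - x i) :=
          (tendsto_natCast_atTop_atTop.atTop_mul_const p2).eventually_ge_atTop 2
        filter_upwards [t1, t2] with m m1 m2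
        simp only [h, st]
        rw [Real.smoothTransition.one_of_one_le (by linarith),
          Real.smoothTransition.one_of_one_le (by linarith), one_mul]
      refine tendsto_nhds_of_eventually_eq ?_
      filter_upwards [hev 0, hev 1] with m m1 m2
      simp [η, m1, m2]
  simp only [integral_zero] at lim
  obtain ⟨m, hm⟩ := (lim.eventually (ge_mem_nhds hδ)).exists
  refine ⟨η m, ηt m, fun x => mul_nonneg (h0 _ _) (h0 _ _),
    fun x => mul_le_one₀ (h1 _ _) (h0 _ _) (h1 _ _), ?_⟩
  rw [← setIntegral_congr_set Qh_ae]
  exact hm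

theorem exists_primitive {h : ℝ → ℝ} (hs : Sm h) (hp : Function.Periodic h 1)
    (h0 : ∫ u in (0:ℝ)..1, h u = 0) : ∃ H : ℝ → ℝ, Sm H ∧ Function.Periodic H 1 ∧
      (∫ u in (0:ℝ)..1, H u = 0) ∧ deriv H = h := by
  let F : ℝ → ℝ := fun x => ∫ u in (0:ℝ)..x, h u
  have hc : Continuous h := hs.continuous
  have hF : ∀ x, HasDerivAt F (h x) x := fun x =>
    intervalIntegral.integral_hasDerivAt_right (hc.intervalIntegrable _ _)
      hc.aestronglyMeasurable.stronglyMeasurableAtFilter hc.continuousAt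
  have dF : deriv F = h := funext fun x => (hF x).deriv
  have sF : Sm F := contDiff_infty_iff_deriv.2 ⟨fun x => (hF x).differentiableAt, by rw [dF]; exact hs⟩
  have pF : Function.Periodic F 1 := by
    intro x
    simp only [F]
    rw [← intervalIntegral.integral_add_adjacent_intervals (b := x) (hc.intervalIntegrable _ _)
      (hc.intervalIntegrable _ _), hp.intervalIntegral_add_eq x 0]
    simp [h0]
  refine ⟨fun x => F x - ∫ u in (0:ℝ)..1, F u, sF.sub contDiff_const, ?_, ?_, ?_⟩
  · intro x; simp only [pF x]
  · rw [intervalIntegral.integral_sub (sF.continuous.intervalIntegrable _ _) (by simp)]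
    simp
  · funext x
    rw [deriv_sub_const, dF]

theorem periodic_bdd {h : ℝ → ℝ} (hc : Continuous h) (hp : Function.Periodic h 1) :
    ∃ A, ∀ u, |h u| ≤ A := by
  have := hp.isBounded_of_continuous one_ne_zero hc
  obtain ⟨A, hA⟩ := this.exists_norm_le
  exact ⟨A, fun u => hA _ ⟨u, rfl⟩⟩

theorem exists_profile {t δ : ℝ} (ht0 : 0 < t) (ht1 : t < 1) (hδ : 0 < δ) : ∃ g : ℝ → ℝ, Sm g ∧
    Function.Periodic g 1 ∧ (∀ u, 0 ≤ g u) ∧ (∀ u, g u ≤ 1) ∧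
    |(∫ u in (0:ℝ)..1, g u) - t| ≤ δ ∧ ∫ u in (0:ℝ)..1, g u * (1 - g u) ≤ δ := by
  let st := Real.smoothTransition
  let g : ℕ → ℝ → ℝ := fun m u => st (m * (Real.cos (2 * Real.pi * u) - Real.cos (Real.pi * t)))
  have gs : ∀ m, Sm (g m) := fun m => by
    have s : ContDiff ℝ ((⊤ : ℕ∞) : WithTop ℕ∞) Real.smoothTransition := Real.smoothTransition.contDiff
    exact s.comp (by fun_prop)
  have gp : ∀ m, Function.Periodic (g m) 1 := fun m u => by
    simp only [g]
    rw [mul_add, mul_one, Real.cos_add_two_pi]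
  have g0 : ∀ m u, 0 ≤ g m u := fun m u => Real.smoothTransition.nonneg _
  have g1 : ∀ m u, g m u ≤ 1 := fun m u => Real.smoothTransition.le_one _
  have hpi := Real.pi_pos
  let ind : ℝ → ℝ := (Set.Ioc (-(t/2)) (t/2)).indicator (fun _ => (1:ℝ))
  have pt : ∀ u, u ∈ Set.Ioc (-(1/2):ℝ) (1/2) → u ≠ t/2 →
      Filter.Tendsto (fun m => g m u) Filter.atTop (nhds (ind u)) ∨ u = -(t/2) := by
    intro u hu hne
    have cabs : Real.cos (2 * Real.pi * u) = Real.cos (2 * Real.pi * |u|) := by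
      rw [← Real.cos_abs (2 * Real.pi * u), abs_mul, abs_of_pos (by positivity)]
    have hau : |u| ≤ 1/2 := abs_le.2 ⟨hu.1.le, hu.2⟩
    rcases lt_trichotomy |u| (t/2) with h | h | h
    · left
      have hin : ind u = 1 := by
        have := abs_lt.1 h
        exact Set.indicator_of_mem (show u ∈ Set.Ioc (-(t/2)) (t/2) from ⟨this.1, this.2.le⟩) _
      rw [hin]
      have pos : 0 < Real.cos (2 * Real.pi * u) - Real.cos (Real.pi * t) := by
        rw [cabs, sub_pos]
        refine Real.cos_lt_cos_of_nonneg_of_le_pi (by positivity) (by nlinarith) (by nlinarith)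
      have t1 : ∀ᶠ m : ℕ in Filter.atTop,
          1 ≤ (m:ℝ) * (Real.cos (2 * Real.pi * u) - Real.cos (Real.pi * t)) :=
        (tendsto_natCast_atTop_atTop.atTop_mul_const pos).eventually_ge_atTop 1
      refine tendsto_nhds_of_eventually_eq ?_
      filter_upwards [t1] with m m1
      exact Real.smoothTransition.one_of_one_le m1
    · right
      rcases abs_choice u with h' | h'
      · exact absurd (h' ▸ h) hne
      · rw [h'] at h; linarith
    · left
      have hin : ind u = 0 := by
        refine Set.indicator_of_notMem (fun hc => ?_) _
        have := abs_le.2 ⟨hc.1.le, hc.2⟩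
        linarith
      rw [hin]
      have neg : Real.cos (2 * Real.pi * u) - Real.cos (Real.pi * t) ≤ 0 := by
        rw [cabs, sub_nonpos]
        refine Real.cos_le_cos_of_nonneg_of_le_pi (by positivity) (by nlinarith) (by nlinarith)
      refine tendsto_nhds_of_eventually_eq (Filter.Eventually.of_forall fun m => ?_)
      exact Real.smoothTransition.zero_of_nonpos (mul_nonpos_of_nonneg_of_nonpos (by positivity) neg)
  have indm : Measurable ind := measurable_const.indicator measurableSet_Ioc
  have ind01 : ∀ u, ind u = 0 ∨ ind u = 1 := by
    intro u
    by_cases h : u ∈ Set.Ioc (-(t/2)) (t/2)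
    · right; exact Set.indicator_of_mem h _
    · left; exact Set.indicator_of_notMem h _
  have absb : ∀ m u, |g m u - ind u| ≤ 1 := by
    intro m u
    rw [abs_le]
    rcases ind01 u with h | h <;> rw [h] <;> constructor <;> linarith [g0 m u, g1 m u]
  have lim : Filter.Tendsto (fun m => ∫ u in Set.Ioc (-(1/2):ℝ) (1/2), |g m u - ind u|) Filter.atTop
      (nhds (∫ _u in Set.Ioc (-(1/2):ℝ) (1/2), (0 : ℝ))) := by
    refine tendsto_integral_of_dominated_convergence (fun _ => (1:ℝ)) ?_ ?_ ?_ ?_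
    · intro m
      exact (((gs m).continuous.measurable.sub indm).norm).aestronglyMeasurable
    · exact integrableOn_const (by simp)
    · intro m
      refine Filter.Eventually.of_forall fun x => ?_
      rw [Real.norm_eq_abs, abs_abs]
      exact absb m x
    · have n1 : ∀ᵐ u ∂(volume : Measure ℝ), u ≠ t/2 := by
        simp [ae_iff]
      have n2 : ∀ᵐ u ∂(volume : Measure ℝ), u ≠ -(t/2) := by
        simp [ae_iff]
      refine (ae_restrict_iff' measurableSet_Ioc).2 ?_
      filter_upwards [n1, n2] with u h1 h2 hu
      rcases pt u hu h1 with h | h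
      · have := (h.sub_const (ind u)).abs
        simpa using this
      · exact absurd h h2
  simp only [integral_zero] at lim
  obtain ⟨m, hm⟩ := (lim.eventually (ge_mem_nhds hδ)).exists
  have gi : IntegrableOn (g m) (Set.Ioc (-(1/2):ℝ) (1/2)) :=
    ((gs m).continuous.integrableOn_Icc).mono_set Set.Ioc_subset_Icc_self
  have ii : IntegrableOn ind (Set.Ioc (-(1/2):ℝ) (1/2)) := by
    refine Integrable.indicator ?_ measurableSet_Ioc
    exact integrableOn_const (by simp)
  have di : IntegrableOn (fun u => |g m u - ind u|) (Set.Ioc (-(1/2):ℝ) (1/2)) := (gi.sub ii).abs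
  have iv : ∫ u in Set.Ioc (-(1/2):ℝ) (1/2), ind u = t := by
    rw [setIntegral_indicator measurableSet_Ioc]
    have : Set.Ioc (-(1/2):ℝ) (1/2) ∩ Set.Ioc (-(t/2)) (t/2) = Set.Ioc (-(t/2)) (t/2) := by
      apply Set.inter_eq_right.2
      exact Set.Ioc_subset_Ioc (by linarith) (by linarith)
    rw [this]
    simp
    linarith
  have shift : ∀ f : ℝ → ℝ, Function.Periodic f 1 → ∫ u in (0:ℝ)..1, f u =
      ∫ u in Set.Ioc (-(1/2):ℝ) (1/2), f u := by
    intro f hf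
    have := hf.intervalIntegral_add_eq 0 (-(1/2))
    rw [zero_add] at this
    rw [this, intervalIntegral.integral_of_le (by norm_num)]
    norm_num
  refine ⟨g m, gs m, gp m, g0 m, g1 m, ?_, ?_⟩
  · rw [shift _ (gp m), ← iv, ← integral_sub gi ii]
    exact (abs_integral_le_integral_abs).trans hm
  · rw [shift (fun u => g m u * (1 - g m u)) (fun u => by simp only [gp m u])]
    refine (integral_mono ?_ di fun u => ?_).trans hm
    · have : Continuous fun u => g m u * (1 - g m u) :=
        (gs m).continuous.mul (continuous_const.sub (gs m).continuous)
      exact (this.integrableOn_Icc).mono_set Set.Ioc_subset_Icc_self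
    · simp only
      have a := g0 m u
      have b := g1 m u
      rcases ind01 u with h | h <;> rw [h]
      · rw [sub_zero, abs_of_nonneg a]; nlinarith
      · rw [abs_sub_comm, abs_of_nonneg (by linarith)]; nlinarith

theorem exists_phase {G : ℝ → ℝ} (hc : Continuous G) (hp : Function.Periodic G 1)
    {L : Vec 2 → ℝ} (hL : Continuous L) :
    ∃ s : ℝ, ∫ x in Qh, G (L x + s) ≤ ∫ u in (0:ℝ)..1, G u := by
  have := Qh_prob
  let μ := (volume : Measure ℝ).restrict (Set.Ioc 0 1)
  have : IsProbabilityMeasure μ := ⟨by simp [μ]⟩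
  obtain ⟨A, hA⟩ := periodic_bdd hc hp
  have hi : Integrable (Function.uncurry fun (s : ℝ) (x : Vec 2) => G (L x + s))
      (μ.prod ((volume : Measure (Vec 2)).restrict Qh)) := by
    refine Integrable.of_bound (C := A) ?_ (Filter.Eventually.of_forall fun p => by
      simpa [Function.uncurry] using hA _)
    have : Continuous (Function.uncurry fun (s : ℝ) (x : Vec 2) => G (L x + s)) := by
      unfold Function.uncurry; fun_prop
    exact this.aestronglyMeasurable
  obtain ⟨s, hs⟩ := exists_le_integral (μ := μ) hi.integral_prod_left
  refine ⟨s, hs.trans (le_of_eq ?_)⟩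
  rw [show (∫ a, (∫ y, (Function.uncurry fun (s : ℝ) (x : Vec 2) => G (L x + s)) (a, y)
    ∂((volume : Measure (Vec 2)).restrict Qh)) ∂μ) = _ from integral_integral_swap hi]
  have : ∀ x : Vec 2, ∫ s, G (L x + s) ∂μ = ∫ u in (0:ℝ)..1, G u := by
    intro x
    have := hp.intervalIntegral_add_eq 0 (L x)
    rw [zero_add] at this
    rw [this, ← intervalIntegral.integral_of_le zero_le_one,
      intervalIntegral.integral_comp_add_left (fun u => G u) (L x), add_zero]
  refine (integral_congr_ae (Filter.Eventually.of_forall this)).trans ?_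
  simp [Qh_vol, Measure.real]


theorem cLam_real {z ζ : ℂ} (h : (z, ζ) ∈ cLam) : ∃ μ : ℝ,
    ζ.re = μ * (z.re ^ 2 - z.im ^ 2) ∧ ζ.im = μ * (2 * z.re * z.im) := by
  obtain ⟨h1, h2⟩ := h
  simp only at h1 h2
  have hq : 0 < z.re ^ 2 + z.im ^ 2 := by
    have := Complex.normSq_pos.2 h1
    rw [Complex.normSq_apply] at this; nlinarith
  have h3 : 2 * z.re * z.im * ζ.re = (z.re ^ 2 - z.im ^ 2) * ζ.im := by
    simp [pow_two] at h2
    linarith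
  refine ⟨(ζ.re * (z.re ^ 2 - z.im ^ 2) + ζ.im * (2 * z.re * z.im)) / (z.re ^ 2 + z.im ^ 2) ^ 2, ?_, ?_⟩
  · field_simp
    linear_combination (2 * z.re * z.im) * h3
  · field_simp
    linear_combination (-(z.re ^ 2 - z.im ^ 2)) * h3

theorem pw_tst {n : Fin 2 → ℝ} {N s : ℝ} {a : ℝ → ℝ} {g : Vec 2 → ℝ} (ha : Sm a) (hg : Tst g) :
    Tst (pw n N s a g) :=
  Tst.mul_left (ContDiff.comp ha (phase_sm n N s)) hg

theorem wave_est {σ : ℂ × ℂ} (hσ : σ ∈ cLam) {H : ℝ → ℝ} (hH : Sm H) {η : Vec 2 → ℝ} (hη : Tst η)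
    (b0 : ∃ A, ∀ u, |H u| ≤ A) (b1 : ∃ A, ∀ u, |deriv H u| ≤ A)
    (b2 : ∃ A, ∀ u, |deriv (deriv H) u| ≤ A) :
    ∃ (n : Fin 2 → ℝ) (E : ℝ), 0 ≤ E ∧ ∀ N : ℝ, 1 ≤ N → ∀ s : ℝ, ∃ φ χ : Vec 2 → ℝ,
      Tst φ ∧ Tst χ ∧ (∀ x i j, |pd i (pd j φ) x| ≤ E / N) ∧
      ∀ x, ‖Wst φ χ x - pw n N s (deriv (deriv (deriv H))) η x • σ‖ ≤ E / N := by
  obtain ⟨z, ζ⟩ := σ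
  obtain ⟨μ, hre, him⟩ := cLam_real hσ
  have hq : 0 < z.re ^ 2 + z.im ^ 2 := by
    have := Complex.normSq_pos.2 hσ.1
    rw [Complex.normSq_apply] at this
    simp only at this
    nlinarith
  set Q := z.re ^ 2 + z.im ^ 2 with hQ
  let n : Fin 2 → ℝ := ![z.im, -z.re]
  obtain ⟨C3, C3n, h3⟩ := pw_bound3 n hH hη b0 b1 b2
  obtain ⟨C2, C2n, h2⟩ := pw_bound n hH hη b0 b1 b2
  obtain ⟨C1, C1n, h1⟩ := pw_bound2 n hH.dv hη b1 b2
  refine ⟨n, 4 * C3 / Q + C2 / Q + 4 * |μ| * C1, by positivity, fun N hN s => ?_⟩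
  have Npos : 0 < N := by linarith
  have t1 : Tst (pw n N s H η) := pw_tst hH hη
  have t2 : Tst (pw n N s (deriv H) η) := pw_tst hH.dv hη
  refine ⟨fun x => (1 / (Q * N ^ 3)) * pw n N s H η x,
    fun x => (2 * μ / N ^ 2) * pw n N s (deriv H) η x, t1.cmul _, t2.cmul _, ?_, ?_⟩
  · intro x i j
    rw [pd_cmul t1.sm, pd_cmul (t1.sm.pd j)]
    simp only
    rw [abs_mul, abs_of_nonneg (by positivity : 0 ≤ 1 / (Q * N ^ 3))]
    have : 1 / (Q * N ^ 3) * |pd i (pd j (pw n N s H η)) x| ≤ 1 / (Q * N ^ 3) * (C2 * N ^ 2) :=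
      mul_le_mul_of_nonneg_left (h2 N hN s x i j) (by positivity)
    refine this.trans ?_
    have e : 1 / (Q * N ^ 3) * (C2 * N ^ 2) = C2 / Q / N := by field_simp
    rw [e]
    refine div_le_div_of_nonneg_right ?_ Npos.le
    have : 0 ≤ 4 * C3 / Q := by positivity
    have : 0 ≤ 4 * |μ| * C1 := by positivity
    linarith
  · intro x
    have g3 := h3 N hN s x
    have g1 := h1 N hN s x
    unfold Wst
    simp only [pd_cmul t1.sm, pd_cmul (t1.sm.pd _), pd_cmul ((t1.sm.pd _).pd _), pd_cmul t2.sm,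
      pd_cmul (t2.sm.pd _)]
    set P := pw n N s (deriv (deriv (deriv H))) η x
    have n0 : n 0 = z.im := rfl
    have n1 : n 1 = -z.re := rfl
    -- third order pieces
    have d3 : ∀ i : Fin 2, |1 / (Q * N ^ 3) * pd i (pd 0 (pd 0 (pw n N s H η))) x +
        1 / (Q * N ^ 3) * pd i (pd 1 (pd 1 (pw n N s H η))) x - n i * P| ≤ 2 * C3 / Q / N := by
      intro i
      have ga := g3 i 0 0
      have gb := g3 i 1 1
      have e : 1 / (Q * N ^ 3) * pd i (pd 0 (pd 0 (pw n N s H η))) x +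
        1 / (Q * N ^ 3) * pd i (pd 1 (pd 1 (pw n N s H η))) x - n i * P =
        1 / (Q * N ^ 3) * ((pd i (pd 0 (pd 0 (pw n N s H η))) x - N ^ 3 * (n i * n 0 * n 0) * P) +
          (pd i (pd 1 (pd 1 (pw n N s H η))) x - N ^ 3 * (n i * n 1 * n 1) * P)) := by
        rw [n0, n1]
        field_simp
        rw [hQ]; ring
      rw [e, abs_mul, abs_of_nonneg (by positivity : 0 ≤ 1 / (Q * N ^ 3))]
      have e2 : 2 * C3 / Q / N = 1 / (Q * N ^ 3) * (C3 * N ^ 2 + C3 * N ^ 2) := by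
        field_simp; ring
      rw [e2]
      exact mul_le_mul_of_nonneg_left ((abs_add_le _ _).trans (add_le_add ga gb)) (by positivity)
    have d2 : ∀ i j : Fin 2, |2 * μ / N ^ 2 * pd i (pd j (pw n N s (deriv H) η)) x
        - 2 * μ * (n i * n j) * P| ≤ 2 * |μ| * C1 / N := by
      intro i j
      have e : 2 * μ / N ^ 2 * pd i (pd j (pw n N s (deriv H) η)) x - 2 * μ * (n i * n j) * P =
        2 * μ / N ^ 2 * (pd i (pd j (pw n N s (deriv H) η)) x - N ^ 2 * (n i * n j) * P) := by
        field_simp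
      rw [e, abs_mul, abs_div, abs_mul, abs_two, abs_of_nonneg (by positivity : 0 ≤ N ^ 2)]
      have e2 : 2 * |μ| * C1 / N = 2 * |μ| / N ^ 2 * (C1 * N) := by field_simp
      rw [e2]
      exact mul_le_mul_of_nonneg_left (g1 i j) (by positivity)
    have tot : (4 * C3 / Q + C2 / Q + 4 * |μ| * C1) / N =
        2 * (2 * C3 / Q / N) + C2 / Q / N + 2 * (2 * |μ| * C1 / N) := by ring
    have p1 : 0 ≤ 2 * C3 / Q / N := by positivity
    have p2 : 0 ≤ C2 / Q / N := by positivity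
    have p3 : 0 ≤ 2 * |μ| * C1 / N := by positivity
    rw [tot, Prod.norm_def]
    refine max_le ?_ ?_
    · refine (Complex.norm_le_abs_re_add_abs_im _).trans ?_
      have a := d3 1
      have b := d3 0
      rw [n1] at a
      rw [n0] at b
      simp only [Prod.fst_sub, Prod.smul_fst, Complex.sub_re, Complex.sub_im, Complex.smul_re,
        Complex.smul_im, smul_eq_mul]
      rw [← abs_neg] at a
      have ea : ∀ u v : ℝ, -(u + v) - P * z.re = -(u + v - -z.re * P) := fun u v => by ring
      rw [ea, mul_comm P z.im]
      linarith
    · refine (Complex.norm_le_abs_re_add_abs_im _).trans ?_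
      have a := d2 1 1
      have b := d2 0 0
      have c := d2 0 1
      rw [n1] at a c
      rw [n0] at b c
      simp only [Prod.snd_sub, Prod.smul_snd, Complex.sub_re, Complex.sub_im, Complex.smul_re,
        Complex.smul_im, smul_eq_mul, hre, him]
      rw [abs_le] at a b c
      have a' : |(2 * μ / N ^ 2 * pd 1 (pd 1 (pw n N s (deriv H) η)) x -
        2 * μ / N ^ 2 * pd 0 (pd 0 (pw n N s (deriv H) η)) x) / 2 -
        P * (μ * (z.re ^ 2 - z.im ^ 2))| ≤ 2 * |μ| * C1 / N := by
        rw [abs_le]; constructor <;> linarith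
      have c' : |-(2 * μ / N ^ 2 * pd 0 (pd 1 (pw n N s (deriv H) η)) x) -
        P * (μ * (2 * z.re * z.im))| ≤ 2 * |μ| * C1 / N := by
        rw [abs_le]; constructor <;> linarith
      linarith

theorem planewave {ξ ξ' : ℂ × ℂ} (hΛ : ξ - ξ' ∈ cLam) {t δ : ℝ} (ht0 : 0 < t) (ht1 : t < 1)
    (hδ : 0 < δ) : ∃ φ χ : Vec 2 → ℝ, Tst φ ∧ Tst χ ∧ (∀ x i j, |pd i (pd j φ) x| ≤ δ) ∧
      (∀ x, ∃ q ∈ Set.Icc (0:ℝ) 1,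
        ‖(t • ξ + (1 - t) • ξ') + Wst φ χ x - (ξ' + q • (ξ - ξ'))‖ ≤ δ) ∧
      ∫ x in Qh, min ‖(t • ξ + (1 - t) • ξ') + Wst φ χ x - ξ‖
        ‖(t • ξ + (1 - t) • ξ') + Wst φ χ x - ξ'‖ ≤ δ := by
  set σ := ξ - ξ' with hσ
  set L := ‖σ‖ with hL
  have Ln : 0 ≤ L := norm_nonneg _
  set d := δ / (8 * (L + 1)) with hd
  have dp : 0 < d := by positivity
  have dL : L * d + d ≤ δ / 8 := by
    have : (L + 1) * d = δ / 8 := by rw [hd]; field_simp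
    nlinarith
  obtain ⟨η, ηt, η0, η1, ηi⟩ := exists_cutoff dp
  obtain ⟨g, gs, gp, g0, g1, gm, gi⟩ := exists_profile ht0 ht1 dp
  set τ := ∫ u in (0:ℝ)..1, g u with hτ
  have hs : Sm (fun u => g u - τ) := gs.sub contDiff_const
  have hp : Function.Periodic (fun u => g u - τ) 1 := fun u => by simp only [gp u]
  obtain ⟨H1, s1, p1, m1, e1⟩ := exists_primitive hs hp (by
    rw [intervalIntegral.integral_sub (gs.continuous.intervalIntegrable _ _) (by simp)]
    simp [hτ])
  obtain ⟨H2, s2, p2, m2, e2⟩ := exists_primitive s1 p1 m1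
  obtain ⟨H3, s3, p3, m3, e3⟩ := exists_primitive s2 p2 m2
  obtain ⟨n, E, En, hE⟩ := wave_est hΛ s3 ηt (periodic_bdd s3.continuous p3)
    (by rw [e3]; exact periodic_bdd s2.continuous p2)
    (by rw [e3, e2]; exact periodic_bdd s1.continuous p1)
  rw [e3, e2, e1] at hE
  set N := max 1 (E / d) with hN
  have N1 : 1 ≤ N := le_max_left _ _
  have Np : 0 < N := by linarith
  have EN : E / N ≤ d := by
    rw [div_le_iff₀ Np]
    have : E / d ≤ N := le_max_right _ _
    rw [div_le_iff₀ dp] at this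
    linarith
  have dδ : d ≤ δ := by nlinarith [mul_nonneg Ln dp.le]
  obtain ⟨s, hsI⟩ := exists_phase (G := fun u => g u * (1 - g u))
    (gs.continuous.mul (continuous_const.sub gs.continuous))
    (fun u => by simp only [gp u]) (L := fun x : Vec 2 => N * (n 0 * x 0 + n 1 * x 1))
    (by fun_prop)
  obtain ⟨φ, χ, tφ, tχ, hφ, hW⟩ := hE N N1 s
  let ℓ : Vec 2 → ℝ := fun x => N * (n 0 * x 0 + n 1 * x 1) + s
  let q : Vec 2 → ℝ := fun x => η x * g (ℓ x) + (1 - η x) * t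
  have q0 : ∀ x, 0 ≤ q x := fun x => by
    have := mul_nonneg (η0 x) (g0 (ℓ x))
    have := mul_nonneg (sub_nonneg.2 (η1 x)) ht0.le
    simp only [q]; linarith
  have q1 : ∀ x, q x ≤ 1 := fun x => by
    have := mul_nonneg (η0 x) (sub_nonneg.2 (g1 (ℓ x)))
    have := mul_nonneg (sub_nonneg.2 (η1 x)) (sub_nonneg.2 ht1.le)
    simp only [q]; nlinarith
  have key : ∀ x, ‖(t • ξ + (1 - t) • ξ') + Wst φ χ x - (ξ' + q x • σ)‖ ≤ L * d + d := by
    intro x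
    have e : (t • ξ + (1 - t) • ξ') + Wst φ χ x - (ξ' + q x • σ) =
        (Wst φ χ x - pw n N s (fun u => g u - τ) η x • σ) + (η x * (t - τ)) • σ := by
      have : pw n N s (fun u => g u - τ) η x = (g (ℓ x) - τ) * η x := rfl
      rw [this, hσ]
      simp only [q]
      module
    rw [e]
    refine (norm_add_le _ _).trans ?_
    have a := (hW x).trans EN
    have b : ‖(η x * (t - τ)) • σ‖ ≤ d * L := by
      rw [norm_smul, Real.norm_eq_abs, abs_mul, abs_of_nonneg (η0 x)]
      refine mul_le_mul_of_nonneg_right ?_ Ln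
      rw [abs_sub_comm]
      calc η x * |τ - t| ≤ 1 * d := mul_le_mul (η1 x) gm (abs_nonneg _) zero_le_one
        _ = d := one_mul d
    linarith
  refine ⟨φ, χ, tφ, tχ, fun x i j => ((hφ x i j).trans EN).trans dδ,
    fun x => ⟨q x, ⟨q0 x, q1 x⟩, (key x).trans (by linarith)⟩, ?_⟩
  have Wc := Wst_cont tφ.sm tχ.sm
  have gc : Continuous fun x : Vec 2 => g (ℓ x) := gs.continuous.comp (by fun_prop)
  have c1 : Continuous fun x : Vec 2 => g (ℓ x) * (1 - g (ℓ x)) := gc.mul (continuous_const.sub gc)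
  have c2 : Continuous fun x : Vec 2 => 1 - η x := continuous_const.sub ηt.sm.continuous
  have pt : ∀ x, min ‖(t • ξ + (1 - t) • ξ') + Wst φ χ x - ξ‖
        ‖(t • ξ + (1 - t) • ξ') + Wst φ χ x - ξ'‖ ≤
        (2 * L) * (g (ℓ x) * (1 - g (ℓ x))) + L * (1 - η x) + δ / 8 := by
    intro x
    have k := (key x).trans dL
    have a0 := g0 (ℓ x)
    have a1 := g1 (ℓ x)
    have w0 := η0 x
    have w1 := η1 x
    set G := g (ℓ x)
    have qq : q x = η x * G + (1 - η x) * t := rfl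
    by_cases hG : G ≤ 1/2
    · refine (min_le_right _ _).trans ?_
      have e : (t • ξ + (1 - t) • ξ') + Wst φ χ x - ξ' =
        ((t • ξ + (1 - t) • ξ') + Wst φ χ x - (ξ' + q x • σ)) + q x • σ := by module
      rw [e]
      refine (norm_add_le _ _).trans ?_
      rw [norm_smul, Real.norm_eq_abs, abs_of_nonneg (q0 x)]
      have : q x ≤ 2 * (G * (1 - G)) + (1 - η x) := by rw [qq]; nlinarith
      have := mul_le_mul_of_nonneg_right this Ln
      linarith
    · refine (min_le_left _ _).trans ?_
      have e : (t • ξ + (1 - t) • ξ') + Wst φ χ x - ξ =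
        ((t • ξ + (1 - t) • ξ') + Wst φ χ x - (ξ' + q x • σ)) + (-(1 - q x)) • σ := by
        rw [hσ]; module
      rw [e]
      refine (norm_add_le _ _).trans ?_
      rw [norm_smul, Real.norm_eq_abs, abs_neg, abs_of_nonneg (sub_nonneg.2 (q1 x))]
      have : 1 - q x ≤ 2 * (G * (1 - G)) + (1 - η x) := by rw [qq]; nlinarith
      have := mul_le_mul_of_nonneg_right this Ln
      linarith
  have i1 := intOn_Qh c1
  have i2 := intOn_Qh c2
  have := Qh_prob
  calc ∫ x in Qh, min ‖(t • ξ + (1 - t) • ξ') + Wst φ χ x - ξ‖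
        ‖(t • ξ + (1 - t) • ξ') + Wst φ χ x - ξ'‖
      ≤ ∫ x in Qh, ((2 * L) * (g (ℓ x) * (1 - g (ℓ x))) + L * (1 - η x) + δ / 8) := by
        refine integral_mono (intOn_Qh (by fun_prop)) (intOn_Qh ?_) pt
        exact ((continuous_const.mul c1).add (continuous_const.mul c2)).add continuous_const
    _ = (2 * L) * (∫ x in Qh, g (ℓ x) * (1 - g (ℓ x))) + L * (∫ x in Qh, (1 - η x)) + δ / 8 := by
        have i12 : IntegrableOn (fun x => (2 * L) * (g (ℓ x) * (1 - g (ℓ x))) + L * (1 - η x)) Qh :=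
          (i1.const_mul _).add (i2.const_mul _)
        rw [integral_add i12 (integrable_const _),
          integral_add (i1.const_mul _) (i2.const_mul _), integral_const_mul, integral_const_mul]
        simp
    _ ≤ (2 * L) * d + L * d + δ / 8 := by
        have := mul_le_mul_of_nonneg_left (hsI.trans gi) (by positivity : 0 ≤ 2 * L)
        have := mul_le_mul_of_nonneg_left ηi Ln
        linarith
    _ ≤ δ := by nlinarith [mul_nonneg Ln dp.le]


/-- lower-left corner of a grid cell (scaled) -/
def kv {M : ℕ} (k : Fin 2 → Fin M) : Vec 2 := fun i => ((k i : ℕ) : ℝ)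

/-- grid cells -/
def cell {M : ℕ} (k : Fin 2 → Fin M) : Set (Vec 2) := {x | (M : ℝ) • x - kv k ∈ Qh}

theorem sq_sub_Qh {x : Vec 2} (h : x ∈ unitSquare) : x ∈ Qh := fun i => ⟨(h i).1.le, (h i).2⟩

theorem cell_uniq {M : ℕ} {k l : Fin 2 → Fin M} {x : Vec 2} (hk : x ∈ cell k) (hl : x ∈ cell l) :
    k = l := by
  funext i
  have h1 := hk i
  have h2 := hl i
  simp only [kv, Pi.sub_apply, Pi.smul_apply, smul_eq_mul, Set.mem_Ico] at h1 h2
  apply Fin.ext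
  have a : ((k i : ℕ) : ℝ) < ((l i : ℕ) : ℝ) + 1 := by linarith
  have b : ((l i : ℕ) : ℝ) < ((k i : ℕ) : ℝ) + 1 := by linarith
  have a' : (k i : ℕ) < (l i : ℕ) + 1 := by exact_mod_cast a
  have b' : (l i : ℕ) < (k i : ℕ) + 1 := by exact_mod_cast b
  omega

theorem cell_meas {M : ℕ} (k : Fin 2 → Fin M) : MeasurableSet (cell k) := by
  have : Continuous fun x : Vec 2 => (M : ℝ) • x - kv k := by fun_prop
  exact this.measurable Qh_meas

theorem cell_sub {M : ℕ} (hM : 0 < M) (k : Fin 2 → Fin M) : cell k ⊆ Qh := by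
  intro x hx i
  have h1 := hx i
  simp only [kv, Pi.sub_apply, Pi.smul_apply, smul_eq_mul, Set.mem_Ico] at h1
  have hM' : (0 : ℝ) < M := by exact_mod_cast hM
  have k0 : (0 : ℝ) ≤ ((k i : ℕ) : ℝ) := by positivity
  have k1 : ((k i : ℕ) : ℝ) + 1 ≤ M := by exact_mod_cast (k i).2
  constructor
  · by_contra hc
    push Not at hc
    nlinarith
  · by_contra hc
    push Not at hc
    nlinarith

theorem cell_cover {M : ℕ} (hM : 0 < M) : (⋃ k : Fin 2 → Fin M, cell k) = Qh := by
  apply Set.Subset.antisymm (Set.iUnion_subset fun k => cell_sub hM k)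
  intro x hx
  have hM' : (0 : ℝ) < M := by exact_mod_cast hM
  have hn : ∀ i, 0 ≤ (M : ℝ) * x i := fun i => mul_nonneg hM'.le (hx i).1
  have hl : ∀ i, ⌊(M : ℝ) * x i⌋₊ < M := fun i => by
    rw [Nat.floor_lt (hn i)]
    have := (hx i).2
    nlinarith
  rw [Set.mem_iUnion]
  refine ⟨fun i => ⟨⌊(M : ℝ) * x i⌋₊, hl i⟩, fun i => ?_⟩
  simp only [kv, Pi.sub_apply, Pi.smul_apply, smul_eq_mul, Set.mem_Ico]
  have := Nat.floor_le (hn i)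
  have := Nat.lt_floor_add_one ((M : ℝ) * x i)
  constructor <;> linarith

theorem int_cells {M : ℕ} (hM : 0 < M) {F : Vec 2 → ℝ} (hF : Continuous F) :
    ∫ x in Qh, F x = ∑ k : Fin 2 → Fin M, ∫ x in cell k, F x := by
  rw [← cell_cover hM, integral_iUnion_fintype]
  · exact fun k => cell_meas k
  · intro k l hkl
    rw [Function.onFun, Set.disjoint_left]
    exact fun x h1 h2 => hkl (cell_uniq h1 h2)
  · exact fun k => (intOn_Qh hF).mono_set (cell_sub hM k)

theorem int_cell {M : ℕ} (k : Fin 2 → Fin M) (G : Vec 2 → ℝ) :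
    ∫ x in cell k, G ((M : ℝ) • x - kv k) = ((M : ℝ) ^ 2)⁻¹ * ∫ x in Qh, G x := by
  rw [← integral_indicator (cell_meas k), ← integral_indicator Qh_meas]
  have e : (cell k).indicator (fun x => G ((M : ℝ) • x - kv k)) =
      fun x => (fun y => Qh.indicator G (y - kv k)) ((M : ℝ) • x) := by
    funext x
    by_cases h : x ∈ cell k
    · have h' : (M : ℝ) • x - kv k ∈ Qh := h
      simp [h, h']
    · have h' : (M : ℝ) • x - kv k ∉ Qh := h
      simp [h, h']
  rw [e, Measure.integral_comp_smul, integral_sub_right_eq_self]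
  simp

theorem cell_dist {M : ℕ} (hM : 0 < M) {k : Fin 2 → Fin M} {x y : Vec 2} (hx : x ∈ cell k)
    (hy : y ∈ cell k) : dist x y ≤ 1 / M := by
  have hM' : (0 : ℝ) < M := by exact_mod_cast hM
  rw [dist_pi_le_iff (by positivity)]
  intro i
  have h1 := hx i
  have h2 := hy i
  simp only [kv, Pi.sub_apply, Pi.smul_apply, smul_eq_mul, Set.mem_Ico] at h1 h2
  rw [Real.dist_eq, le_div_iff₀ hM']
  have h3 : |x i - y i| * M = |(x i - y i) * M| := by rw [abs_mul, abs_of_pos hM']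
  rw [h3, abs_le]; constructor <;> nlinarith

/-- the approximation property -/
def Good (𝒰 : Set (ℂ × ℂ)) (D : ℂ × ℂ → ℝ) (κ ε : ℝ) (p : ℂ × ℂ) : Prop :=
  ∃ (φ χ : Vec 2 → ℝ) (b : ℝ), Tst φ ∧ Tst χ ∧ 0 < b ∧ b ≤ ε ∧
    (∀ x e, ‖e‖ ≤ b → p + Wst φ χ x + e ∈ 𝒰) ∧
    (∀ x i j, |pd i (pd j φ) x| ≤ κ * b) ∧
    ∫ x in Qh, D (p + Wst φ χ x) < ε

theorem good_step {𝒰 : Set (ℂ × ℂ)} (hU : IsOpen 𝒰) {D : ℂ × ℂ → ℝ} (D0 : ∀ y, 0 ≤ D y)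
    (DL : ∀ y z, D y ≤ D z + ‖y - z‖) {κ ε : ℝ} (hκ : 0 < κ) {ξ ξ' : ℂ × ℂ}
    (h1 : Good 𝒰 D κ ε ξ) (h2 : Good 𝒰 D κ ε ξ') (hΛ : ξ - ξ' ∈ cLam)
    (hseg : ∀ q ∈ Set.Icc (0:ℝ) 1, ξ' + q • (ξ - ξ') ∈ 𝒰) {t : ℝ} (ht : t ∈ Set.Icc (0:ℝ) 1) :
    Good 𝒰 D κ ε (t • ξ + (1 - t) • ξ') := by
  rcases ht.1.eq_or_lt with rfl | t0
  · simpa using h2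
  rcases ht.2.eq_or_lt with rfl | t1
  · simpa using h1
  obtain ⟨φ1, χ1, b1, f1, g1, b1p, b1e, u1, d1, i1⟩ := h1
  obtain ⟨φ2, χ2, b2, f2, g2, b2p, b2e, u2, d2, i2⟩ := h2
  have Dc : Continuous D := by
    refine (LipschitzWith.of_le_add_mul 1 (fun x y => ?_)).continuous
    simpa [dist_eq_norm] using DL x y
  -- segment
  set sg : Set (ℂ × ℂ) := (fun q : ℝ => ξ' + q • (ξ - ξ')) '' Set.Icc 0 1 with hsg
  have sgc : IsCompact sg := isCompact_Icc.image (by fun_prop)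
  have sgs : sg ⊆ 𝒰 := by
    rintro _ ⟨q, hq, rfl⟩
    exact hseg q hq
  obtain ⟨b3, b3p, hb3⟩ := sgc.exists_cthickening_subset_open hU sgs
  have seg3 : ∀ q ∈ Set.Icc (0:ℝ) 1, ∀ y, ‖y - (ξ' + q • (ξ - ξ'))‖ ≤ b3 → y ∈ 𝒰 := by
    intro q hq y hy
    refine hb3 (Metric.mem_cthickening_of_dist_le y _ b3 sg ⟨q, hq, rfl⟩ ?_)
    simpa [dist_eq_norm] using hy
  set b := min b1 (min b2 b3) / 2 with hb
  have bp : 0 < b := by positivity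
  have bb1 : 2 * b ≤ b1 := by rw [hb]; linarith [min_le_left b1 (min b2 b3)]
  have bb2 : 2 * b ≤ b2 := by
    rw [hb]; linarith [min_le_right b1 (min b2 b3), min_le_left b2 b3]
  have bb3 : 2 * b ≤ b3 := by
    rw [hb]; linarith [min_le_right b1 (min b2 b3), min_le_right b2 b3]
  set I1 := ∫ x in Qh, D (ξ + Wst φ1 χ1 x) with hI1
  set I2 := ∫ x in Qh, D (ξ' + Wst φ2 χ2 x) with hI2
  set m := max I1 I2 with hm
  have mlt : m < ε := max_lt i1 i2
  have I10 : 0 ≤ I1 := integral_nonneg fun x => D0 _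
  have m0 : 0 ≤ m := I10.trans (le_max_left _ _)
  set η := ε - m with hη
  have ηp : 0 < η := by rw [hη]; linarith
  set δ := min b (η / 2) with hδ
  have δp : 0 < δ := by positivity
  have δb : δ ≤ b := min_le_left _ _
  have δη : δ ≤ η / 2 := min_le_right _ _
  set C := D ξ' + ‖ξ - ξ'‖ + 1 with hC
  have Cp : 0 < C := by have := D0 ξ'; positivity
  set d := min (min b 1) (min (κ * b / 2) (η * δ / (8 * C))) with hd
  have dp : 0 < d := by positivity
  have db : d ≤ b := (min_le_left _ _).trans (min_le_left _ _)
  have d1' : d ≤ 1 := (min_le_left _ _).trans (min_le_right _ _)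
  have dk : d ≤ κ * b / 2 := (min_le_right _ _).trans (min_le_left _ _)
  have dη : d ≤ η * δ / (8 * C) := (min_le_right _ _).trans (min_le_right _ _)
  obtain ⟨φ0, χ0, f0, g0, d0, s0, m0'⟩ := planewave hΛ t0 t1 dp
  set p := t • ξ + (1 - t) • ξ' with hp
  have W0c : Continuous (Wst φ0 χ0) := Wst_cont f0.sm g0.sm
  have W1c : Continuous (Wst φ1 χ1) := Wst_cont f1.sm g1.sm
  have W2c : Continuous (Wst φ2 χ2) := Wst_cont f2.sm g2.sm
  have DC : ∀ x, D (p + Wst φ0 χ0 x) ≤ C := by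
    intro x
    obtain ⟨q, hq, hx⟩ := s0 x
    have e1 := DL (p + Wst φ0 χ0 x) (ξ' + q • (ξ - ξ'))
    have e2 := DL (ξ' + q • (ξ - ξ')) ξ'
    have e3 : ‖ξ' + q • (ξ - ξ') - ξ'‖ ≤ ‖ξ - ξ'‖ := by
      rw [add_sub_cancel_left, norm_smul, Real.norm_eq_abs, abs_of_nonneg hq.1]
      exact mul_le_of_le_one_left (norm_nonneg _) hq.2
    linarith
  have U0 : ∀ x e, ‖e‖ ≤ b → p + Wst φ0 χ0 x + e ∈ 𝒰 := by
    intro x e he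
    obtain ⟨q, hq, hx⟩ := s0 x
    refine seg3 q hq _ ?_
    have : p + Wst φ0 χ0 x + e - (ξ' + q • (ξ - ξ')) = (p + Wst φ0 χ0 x - (ξ' + q • (ξ - ξ'))) + e := by
      abel
    rw [this]
    exact (norm_add_le _ _).trans (by linarith)
  -- uniform continuity
  have uc : UniformContinuousOn (Wst φ0 χ0) (Set.Icc (0 : Vec 2) 1) :=
    isCompact_Icc.uniformContinuousOn_of_continuous W0c.continuousOn
  obtain ⟨ρ, ρp, hρ⟩ := Metric.uniformContinuousOn_iff.1 uc (δ / 2) (by positivity)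
  obtain ⟨M, hMM⟩ := exists_nat_gt (max (1 / ρ) (2 * (b1 + b2) / b))
  have M1 : 1 / ρ < M := (le_max_left _ _).trans_lt hMM
  have M2 : 2 * (b1 + b2) / b < M := (le_max_right _ _).trans_lt hMM
  have Mp' : (0 : ℝ) < M := lt_trans (by positivity) M1
  have Mp : 0 < M := by exact_mod_cast Mp'
  have Mρ : 1 / (M : ℝ) < ρ := by
    rw [div_lt_iff₀ ρp] at M1
    rw [div_lt_iff₀ Mp']; linarith
  have Mb : (M : ℝ)⁻¹ * (κ * (b1 + b2)) ≤ κ * b / 2 := by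
    rw [div_lt_iff₀ bp] at M2
    rw [inv_mul_le_iff₀ Mp']
    nlinarith
  have Qicc : Qh ⊆ Set.Icc (0 : Vec 2) 1 := fun x hx => ⟨fun i => (hx i).1, fun i => (hx i).2.le⟩
  have osc : ∀ (k : Fin 2 → Fin M) x y, x ∈ cell k → y ∈ cell k →
      ‖Wst φ0 χ0 x - Wst φ0 χ0 y‖ < δ / 2 := by
    intro k x y hx hy
    rw [← dist_eq_norm]
    exact hρ x (Qicc (cell_sub Mp k hx)) y (Qicc (cell_sub Mp k hy)) ((cell_dist Mp hx hy).trans_lt Mρ)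
  set mn : Vec 2 → ℝ := fun x => min ‖p + Wst φ0 χ0 x - ξ‖ ‖p + Wst φ0 χ0 x - ξ'‖ with hmn
  have mnc : Continuous mn := by fun_prop
  have mn0 : ∀ x, 0 ≤ mn x := fun x => le_min (norm_nonneg _) (norm_nonneg _)
  have cint : ∀ (k : Fin 2 → Fin M) {F : Vec 2 → ℝ}, Continuous F → IntegrableOn F (cell k) :=
    fun k F hF => (intOn_Qh hF).mono_set (cell_sub Mp k)
  have := Qh_prob
  -- good cells
  have goodcell : ∀ (k : Fin 2 → Fin M) (ζ : ℂ × ℂ) (φ χ : Vec 2 → ℝ) (bz : ℝ), Tst φ → Tst χ →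
      2 * b ≤ bz → (∀ x e, ‖e‖ ≤ bz → ζ + Wst φ χ x + e ∈ 𝒰) →
      (∫ x in Qh, D (ζ + Wst φ χ x)) ≤ m →
      (∃ x ∈ cell k, ‖p + Wst φ0 χ0 x - ζ‖ < δ / 2) →
      (∀ x ∈ cell k, ∀ e, ‖e‖ ≤ b → p + Wst φ0 χ0 x + Wst φ χ ((M : ℝ) • x - kv k) + e ∈ 𝒰) ∧
      ∫ x in cell k, D (p + Wst φ0 χ0 x + Wst φ χ ((M : ℝ) • x - kv k)) ≤
        ((M : ℝ) ^ 2)⁻¹ * (m + δ) + (2 * C / δ) * ∫ x in cell k, mn x := by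
    intro k ζ φ χ bz hφ hχ hbz hu hi ⟨x0, hx0, hx0'⟩
    have cl : ∀ x ∈ cell k, ‖p + Wst φ0 χ0 x - ζ‖ ≤ δ := by
      intro x hx
      have : p + Wst φ0 χ0 x - ζ = (Wst φ0 χ0 x - Wst φ0 χ0 x0) + (p + Wst φ0 χ0 x0 - ζ) := by abel
      rw [this]
      refine (norm_add_le _ _).trans ?_
      linarith [osc k x x0 hx hx0]
    have Wc : Continuous (Wst φ χ) := Wst_cont hφ.sm hχ.sm
    constructor
    · intro x hx e he
      have : p + Wst φ0 χ0 x + Wst φ χ ((M : ℝ) • x - kv k) + e =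
        ζ + Wst φ χ ((M : ℝ) • x - kv k) + ((p + Wst φ0 χ0 x - ζ) + e) := by abel
      rw [this]
      refine hu _ _ ((norm_add_le _ _).trans ?_)
      linarith [cl x hx]
    · have e1 : ∫ x in cell k, D (p + Wst φ0 χ0 x + Wst φ χ ((M : ℝ) • x - kv k)) ≤
          ∫ x in cell k, (fun y => D (ζ + Wst φ χ y) + δ) ((M : ℝ) • x - kv k) := by
        refine setIntegral_mono_on (cint k (by fun_prop)) (cint k (by fun_prop)) (cell_meas k) ?_
        intro x hx
        have a := DL (p + Wst φ0 χ0 x + Wst φ χ ((M : ℝ) • x - kv k))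
          (ζ + Wst φ χ ((M : ℝ) • x - kv k))
        have : p + Wst φ0 χ0 x + Wst φ χ ((M : ℝ) • x - kv k) -
          (ζ + Wst φ χ ((M : ℝ) • x - kv k)) = p + Wst φ0 χ0 x - ζ := by abel
        rw [this] at a
        have := cl x hx
        simp only
        linarith
      rw [int_cell k (fun y => D (ζ + Wst φ χ y) + δ), integral_add (intOn_Qh (by fun_prop)) (integrable_const _)] at e1
      have e2 : 0 ≤ (2 * C / δ) * ∫ x in cell k, mn x :=
        mul_nonneg (by positivity) (integral_nonneg mn0)
      have e3 : (∫ x in Qh, D (ζ + Wst φ χ x)) + (∫ x in Qh, δ) ≤ m + δ := by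
        have : (∫ x in Qh, δ) = δ := by rw [integral_const]; simp
        rw [this]; linarith
      have := mul_le_mul_of_nonneg_left e3 (by positivity : 0 ≤ ((M : ℝ) ^ 2)⁻¹)
      linarith
  have zz : Wst (fun _ => 0) (fun _ => 0) = fun _ => 0 := by
    have e : ∀ i : Fin 2, pd i (fun _ : Vec 2 => (0 : ℝ)) = fun _ => 0 := by
      intro i; funext x; simp [pd]
    funext x
    unfold Wst
    simp only [e]
    refine Prod.ext ?_ ?_ <;> apply Complex.ext <;> simp
  have exk : ∀ k : Fin 2 → Fin M, ∃ φ χ : Vec 2 → ℝ, Tst φ ∧ Tst χ ∧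
      (∀ x i j, |pd i (pd j φ) x| ≤ κ * (b1 + b2)) ∧
      (∀ x ∈ cell k, ∀ e, ‖e‖ ≤ b → p + Wst φ0 χ0 x + Wst φ χ ((M : ℝ) • x - kv k) + e ∈ 𝒰) ∧
      ∫ x in cell k, D (p + Wst φ0 χ0 x + Wst φ χ ((M : ℝ) • x - kv k)) ≤
        ((M : ℝ) ^ 2)⁻¹ * (m + δ) + (2 * C / δ) * ∫ x in cell k, mn x := by
    intro k
    by_cases c1 : ∃ x ∈ cell k, ‖p + Wst φ0 χ0 x - ξ‖ < δ / 2
    · exact ⟨φ1, χ1, f1, g1, fun x i j => (d1 x i j).trans (by nlinarith),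
        goodcell k ξ φ1 χ1 b1 f1 g1 bb1 u1 (le_max_left _ _) c1⟩
    by_cases c2 : ∃ x ∈ cell k, ‖p + Wst φ0 χ0 x - ξ'‖ < δ / 2
    · exact ⟨φ2, χ2, f2, g2, fun x i j => (d2 x i j).trans (by nlinarith),
        goodcell k ξ' φ2 χ2 b2 f2 g2 bb2 u2 (le_max_right _ _) c2⟩
    push Not at c1 c2
    refine ⟨fun _ => 0, fun _ => 0, tst_zero, tst_zero, ?_, ?_, ?_⟩
    · intro x i j
      have e : ∀ i : Fin 2, pd i (fun _ : Vec 2 => (0 : ℝ)) = fun _ => 0 := by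
        intro i; funext x; simp [pd]
      simp only [e, abs_zero]; positivity
    · intro x hx e he
      rw [zz]
      simpa using U0 x e he
    · rw [zz]
      simp only [add_zero]
      have e1 : ∫ x in cell k, D (p + Wst φ0 χ0 x) ≤ ∫ x in cell k, (2 * C / δ) * mn x := by
        refine setIntegral_mono_on (cint k (by fun_prop)) (cint k (by fun_prop)) (cell_meas k) ?_
        intro x hx
        refine (DC x).trans ?_
        have : δ / 2 ≤ mn x := le_min (c1 x hx) (c2 x hx)
        calc C = (2 * C / δ) * (δ / 2) := by field_simp
          _ ≤ _ := mul_le_mul_of_nonneg_left this (by positivity)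
      rw [integral_const_mul] at e1
      have : 0 ≤ ((M : ℝ) ^ 2)⁻¹ * (m + δ) := by positivity
      linarith
  choose φ χ hφ hχ hd hu hi using exk
  set Φ : Vec 2 → ℝ := fun x => φ0 x + ∑ k, ((M : ℝ) ^ 3)⁻¹ * φ k ((M : ℝ) • x - kv k) with hΦ
  set X : Vec 2 → ℝ := fun x => χ0 x + ∑ k, ((M : ℝ) ^ 2)⁻¹ * χ k ((M : ℝ) • x - kv k) with hX
  have tΦ : Tst Φ := f0.add (Tst.sum _ fun k => ((hφ k).sc Mp k).cmul _)
  have tX : Tst X := g0.add (Tst.sum _ fun k => ((hχ k).sc Mp k).cmul _)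
  have We : ∀ x, Wst Φ X x = Wst φ0 χ0 x + ∑ k, Wst (φ k) (χ k) ((M : ℝ) • x - kv k) := fun x =>
    Wst_ins _ f0.sm g0.sm (fun k => (hφ k).sm) (fun k => (hχ k).sm) Mp'.ne' _ x
  have Wcell : ∀ k, ∀ x ∈ cell k,
      Wst Φ X x = Wst φ0 χ0 x + Wst (φ k) (χ k) ((M : ℝ) • x - kv k) := by
    intro k x hx
    rw [We, Finset.sum_eq_single k]
    · intro l _ hl
      refine Wst_zero_off (hφ l) (hχ l) fun h => hl ?_
      exact cell_uniq (show x ∈ cell l from sq_sub_Qh h) hx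
    · simp
  refine ⟨Φ, X, b, tΦ, tX, bp, by linarith, ?_, ?_, ?_⟩
  · intro x e he
    by_cases hx : ∃ k : Fin 2 → Fin M, x ∈ cell k
    · obtain ⟨k, hk⟩ := hx
      rw [Wcell k x hk, ← add_assoc p]
      exact hu k x hk e he
    · push Not at hx
      rw [We, Finset.sum_eq_zero, add_zero]
      · exact U0 x e he
      · intro l _
        exact Wst_zero_off (hφ l) (hχ l) fun h => hx l (sq_sub_Qh h)
  · intro x i j
    have e : pd i (pd j Φ) x = pd i (pd j φ0) x +
        ∑ k, (((M : ℝ) ^ 3)⁻¹ * M * M) * pd i (pd j (φ k)) ((M : ℝ) • x - kv k) :=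
      congrFun (pd2_ins _ f0.sm (fun k => (hφ k).sm) _ _ _ i j) x
    have e3 : ((M : ℝ) ^ 3)⁻¹ * M * M = (M : ℝ)⁻¹ := by field_simp
    rw [e, e3]
    have a0 := d0 x i j
    have a1 : |∑ k, (M : ℝ)⁻¹ * pd i (pd j (φ k)) ((M : ℝ) • x - kv k)| ≤ κ * b / 2 := by
      by_cases hx : ∃ k : Fin 2 → Fin M, x ∈ cell k
      · obtain ⟨k, hk⟩ := hx
        rw [Finset.sum_eq_single k]
        · rw [abs_mul, abs_of_pos (by positivity : 0 < (M : ℝ)⁻¹)]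
          exact (mul_le_mul_of_nonneg_left (hd k _ i j) (by positivity)).trans Mb
        · intro l _ hl
          rw [(((hφ l).pd j).pd i).zero_off, mul_zero]
          exact fun h => hl (cell_uniq (show x ∈ cell l from sq_sub_Qh h) hk)
        · simp
      · push Not at hx
        rw [Finset.sum_eq_zero]
        · simp; positivity
        · intro l _
          rw [(((hφ l).pd j).pd i).zero_off, mul_zero]
          exact fun h => hx l (sq_sub_Qh h)
    refine (abs_add_le _ _).trans ?_
    linarith
  · have Wc : Continuous (Wst Φ X) := Wst_cont tΦ.sm tX.sm
    rw [int_cells Mp (by fun_prop)]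
    have e1 : ∑ k : Fin 2 → Fin M, ∫ x in cell k, D (p + Wst Φ X x) ≤
        ∑ k : Fin 2 → Fin M, (((M : ℝ) ^ 2)⁻¹ * (m + δ) + (2 * C / δ) * ∫ x in cell k, mn x) := by
      refine Finset.sum_le_sum fun k _ => ?_
      refine le_trans (le_of_eq ?_) (hi k)
      refine setIntegral_congr_fun (cell_meas k) fun x hx => ?_
      show D _ = D _
      rw [Wcell k x hx, ← add_assoc p]
    have e0 : ∑ k : Fin 2 → Fin M, (2 * C / δ) * ∫ x in cell k, mn x =
        (2 * C / δ) * ∫ x in Qh, mn x := by rw [← Finset.mul_sum, ← int_cells Mp mnc]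
    rw [Finset.sum_add_distrib, e0] at e1
    have e2 : ∑ k : Fin 2 → Fin M, ((M : ℝ) ^ 2)⁻¹ * (m + δ) = m + δ := by
      rw [Finset.sum_const, nsmul_eq_mul, ← mul_assoc, Finset.card_univ, Fintype.card_fun,
        Fintype.card_fin, Fintype.card_fin, Nat.cast_pow, mul_inv_cancel₀ (by positivity), one_mul]
    rw [e2] at e1
    have e3 : (2 * C / δ) * ∫ x in Qh, mn x ≤ η / 4 := by
      calc (2 * C / δ) * ∫ x in Qh, mn x ≤ (2 * C / δ) * (η * δ / (8 * C)) :=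
            mul_le_mul_of_nonneg_left (m0'.trans dη) (by positivity)
        _ = η / 4 := by field_simp; ring
    linarith

theorem lamIter_open {L S : Set (ℂ × ℂ)} (hS : IsOpen S) (n : ℕ) : IsOpen (lamIter L S n) := by
  induction n with
  | zero => exact hS
  | succ n ih =>
    refine ih.union ?_
    rw [Metric.isOpen_iff]
    rintro p ⟨ξ, ξ', t, h1, h2, h3, h4, rfl⟩
    obtain ⟨ρ1, p1, b1⟩ := Metric.isOpen_iff.1 ih ξ h1
    obtain ⟨ρ2, p2, b2⟩ := Metric.isOpen_iff.1 ih ξ' h2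
    refine ⟨min ρ1 ρ2, lt_min p1 p2, fun q hq => ?_⟩
    rw [Metric.mem_ball, dist_eq_norm] at hq
    set h := q - (t • ξ + (1 - t) • ξ') with hh
    refine ⟨ξ + h, ξ' + h, t, b1 ?_, b2 ?_, ?_, h4, ?_⟩
    · rw [Metric.mem_ball, dist_eq_norm]
      simpa using hq.trans_le (min_le_left _ _)
    · rw [Metric.mem_ball, dist_eq_norm]
      simpa using hq.trans_le (min_le_right _ _)
    · simpa using h3
    · have : q = h + (t • ξ + (1 - t) • ξ') := by rw [hh]; abel
      rw [this]; module

theorem lamHull_open {L S : Set (ℂ × ℂ)} (hS : IsOpen S) : IsOpen (lamHull L S) :=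
  isOpen_iUnion fun n => lamIter_open hS n

theorem lamIter_mono {L S : Set (ℂ × ℂ)} : Monotone (lamIter L S) :=
  monotone_nat_of_le_succ fun _ => Set.subset_union_left

theorem lamHull_lam {L S : Set (ℂ × ℂ)} {ξ ξ' : ℂ × ℂ} (h : ξ ∈ lamHull L S) (h' : ξ' ∈ lamHull L S)
    (hL : ξ - ξ' ∈ L) {t : ℝ} (ht : t ∈ Set.Icc (0:ℝ) 1) : t • ξ + (1 - t) • ξ' ∈ lamHull L S := by
  obtain ⟨n, hn⟩ := Set.mem_iUnion.1 h
  obtain ⟨m, hm⟩ := Set.mem_iUnion.1 h'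
  refine Set.mem_iUnion.2 ⟨max n m + 1, Or.inr ⟨ξ, ξ', t, ?_, ?_, hL, ht, rfl⟩⟩
  · exact lamIter_mono (le_max_left _ _) hn
  · exact lamIter_mono (le_max_right _ _) hm

theorem lamHull_sub {L S A : Set (ℂ × ℂ)} (h0 : S ⊆ A)
    (h1 : ∀ ξ ∈ A, ∀ ξ' ∈ A, ξ - ξ' ∈ L → ∀ t ∈ Set.Icc (0:ℝ) 1, t • ξ + (1 - t) • ξ' ∈ A) :
    lamHull L S ⊆ A := by
  refine Set.iUnion_subset fun n => ?_
  induction n with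
  | zero => exact h0
  | succ n ih =>
    refine Set.union_subset ih ?_
    rintro p ⟨ξ, ξ', t, a, b, c, d, rfl⟩
    exact h1 ξ (ih a) ξ' (ih b) c t d

/-- rotation action -/
def Rt (θ : ℝ) (z ζ : ℂ) : ℂ × ℂ :=
  (z * Complex.exp (θ * Complex.I), ζ * Complex.exp (2 * θ * Complex.I))

theorem exp_two (θ : ℝ) : Complex.exp (2 * θ * Complex.I) = Complex.exp (θ * Complex.I) ^ 2 := by
  rw [← Complex.exp_nat_mul]; congr 1; push_cast; ring

theorem exp_conj (θ : ℝ) : Complex.exp (θ * Complex.I) * (starRingEnd ℂ) (Complex.exp (θ * Complex.I)) = 1 := by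
  rw [Complex.mul_conj, Complex.normSq_eq_norm_sq, Complex.norm_exp_ofReal_mul_I]; simp

theorem Rt_inv (θ : ℝ) (z ζ : ℂ) :
    (Rt θ z ζ).1 ^ 2 * (starRingEnd ℂ) (Rt θ z ζ).2 = z ^ 2 * (starRingEnd ℂ) ζ := by
  simp only [Rt, exp_two, map_mul, map_pow]
  have h := exp_conj θ
  set u := Complex.exp (θ * Complex.I)
  linear_combination (z ^ 2 * (starRingEnd ℂ) ζ * (u * (starRingEnd ℂ) u + 1)) * h

theorem Rt_quarter (θ : ℝ) (z ζ : ℂ) : Rt (θ + Real.pi / 2) z ζ = Rt θ (Complex.I * z) (-ζ) := by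
  have e : Complex.exp (((θ + Real.pi / 2 : ℝ) : ℂ) * Complex.I) = Complex.exp (θ * Complex.I) * Complex.I := by
    push_cast
    rw [add_mul, Complex.exp_add, Complex.exp_pi_div_two_mul_I]
  simp only [Rt, exp_two, e, mul_pow, Complex.I_sq]
  refine Prod.ext ?_ ?_
  · simp only; ring
  · simp only; ring

theorem Rt_half (θ : ℝ) (z ζ : ℂ) : Rt (θ + Real.pi / 2 + Real.pi / 2) z ζ = Rt θ (-z) ζ := by
  rw [Rt_quarter, Rt_quarter, ← mul_assoc, Complex.I_mul_I]; simp

theorem Rt_norm (θ : ℝ) (z ζ : ℂ) : ‖Rt θ z ζ‖ = max ‖z‖ ‖ζ‖ := by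
  simp only [Rt, exp_two, Prod.norm_mk, norm_mul, norm_pow, Complex.norm_exp_ofReal_mul_I]
  simp

theorem Rt_sub (θ : ℝ) (z ζ z' ζ' : ℂ) : Rt θ z ζ - Rt θ z' ζ' = Rt θ (z - z') (ζ - ζ') := by
  simp only [Rt, Prod.mk_sub_mk]; congr 1 <;> ring

theorem Rt_comb (θ : ℝ) (z ζ z' ζ' : ℂ) (t : ℝ) : t • Rt θ z ζ + (1 - t) • Rt θ z' ζ' =
    Rt θ (t * z + (1 - t) * z') (t * ζ + (1 - t) * ζ') := by
  simp only [Rt, Prod.smul_mk, Prod.mk_add_mk, Complex.real_smul]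
  push_cast
  congr 1 <;> ring

/-- invariant description of `Vset` -/
def gV (r : ℝ) (p : ℂ × ℂ) : ℝ :=
  Real.sqrt r * Real.sqrt ((‖p.1‖ ^ 2 + (p.1 ^ 2 * (starRingEnd ℂ) p.2).re / ‖p.2‖) / 2) / (r / 2 + ‖p.2‖) +
  Real.sqrt r * Real.sqrt ((‖p.1‖ ^ 2 - (p.1 ^ 2 * (starRingEnd ℂ) p.2).re / ‖p.2‖) / 2) / (r / 2 - ‖p.2‖)

theorem gV_Rt (r θ : ℝ) (z : ℂ) {c : ℝ} (hc : c ≠ 0) : gV r (Rt θ z c) = fr r z c := by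
  have n1 : ‖(Rt θ z c).1‖ = ‖z‖ := by
    simp [Rt, Complex.norm_exp_ofReal_mul_I]
  have n2 : ‖(Rt θ z c).2‖ = |c| := by
    simp [Rt, exp_two, Complex.norm_exp_ofReal_mul_I]
  have n3 : (z ^ 2 * (starRingEnd ℂ) (c : ℂ)).re = (z.re ^ 2 - z.im ^ 2) * c := by
    rw [Complex.conj_ofReal, Complex.re_mul_ofReal, pow_two, Complex.mul_re]; ring
  have n4 : ‖z‖ ^ 2 = z.re ^ 2 + z.im ^ 2 := by
    rw [← Complex.normSq_eq_norm_sq, Complex.normSq_apply]; ring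
  unfold gV fr
  rw [Rt_inv, n1, n2, n3, n4]
  rcases lt_or_gt_of_ne hc with h | h
  · rw [abs_of_neg h]
    have e : (z.re ^ 2 - z.im ^ 2) * c / -c = z.im ^ 2 - z.re ^ 2 := by field_simp; ring
    have e1 : (z.re ^ 2 + z.im ^ 2 + (z.im ^ 2 - z.re ^ 2)) / 2 = z.im ^ 2 := by ring
    have e2 : (z.re ^ 2 + z.im ^ 2 - (z.im ^ 2 - z.re ^ 2)) / 2 = z.re ^ 2 := by ring
    rw [e, e1, e2, Real.sqrt_sq_eq_abs, Real.sqrt_sq_eq_abs, sub_neg_eq_add, ← sub_eq_add_neg, add_comm]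
  · rw [abs_of_pos h]
    have e : (z.re ^ 2 - z.im ^ 2) * c / c = z.re ^ 2 - z.im ^ 2 := by field_simp
    have e1 : (z.re ^ 2 + z.im ^ 2 + (z.re ^ 2 - z.im ^ 2)) / 2 = z.re ^ 2 := by ring
    have e2 : (z.re ^ 2 + z.im ^ 2 - (z.re ^ 2 - z.im ^ 2)) / 2 = z.im ^ 2 := by ring
    rw [e, e1, e2, Real.sqrt_sq_eq_abs, Real.sqrt_sq_eq_abs]

theorem Rt_exists (p : ℂ × ℂ) : ∃ (θ : ℝ) (z : ℂ), p = Rt θ z ((‖p.2‖ : ℝ) : ℂ) := by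
  refine ⟨Complex.arg p.2 / 2, p.1 * Complex.exp (-((Complex.arg p.2 / 2 : ℝ) * Complex.I)), ?_⟩
  refine Prod.ext ?_ ?_
  · simp only [Rt]
    rw [mul_assoc, ← Complex.exp_add]; simp
  · simp only [Rt]
    have : (2 * ((Complex.arg p.2 / 2 : ℝ) : ℂ) * Complex.I) = Complex.arg p.2 * Complex.I := by
      push_cast; ring
    rw [this, Complex.norm_mul_exp_arg_mul_I]

theorem Vset_eq (r : ℝ) : Vset r = {p | (p.2 ≠ 0 ∧ ‖p.2‖ < r / 2) ∧ gV r p < 1} := by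
  ext p
  constructor
  · rintro ⟨z, c, θ, h1, h2, h3, hp⟩
    have hp' : p = Rt θ z c := hp
    have hc : c ≠ 0 := abs_pos.1 h2
    have n2 : ‖(Rt θ z c).2‖ = |c| := by
      simp [Rt, exp_two, Complex.norm_exp_ofReal_mul_I]
    rw [hp']
    refine ⟨⟨?_, by rw [n2]; exact h3⟩, by rw [gV_Rt r θ z hc]; exact h1⟩
    rw [← norm_pos_iff, n2]; exact h2
  · rintro ⟨⟨h1, h2⟩, h3⟩
    obtain ⟨θ, z, hz⟩ := Rt_exists p
    have hn : ‖p.2‖ ≠ 0 := norm_ne_zero_iff.2 h1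
    refine ⟨z, ‖p.2‖, θ, ?_, ?_, ?_, hz⟩
    · rw [← gV_Rt r θ z hn, ← hz]; exact h3
    · rw [abs_of_nonneg (norm_nonneg _)]; exact norm_pos_iff.2 h1
    · rw [abs_of_nonneg (norm_nonneg _)]; exact h2

theorem Vset_open {r : ℝ} (hr : 0 < r) : IsOpen (Vset r) := by
  rw [Vset_eq]
  have hs : IsOpen {p : ℂ × ℂ | p.2 ≠ 0 ∧ ‖p.2‖ < r / 2} := by
    refine IsOpen.inter (isOpen_ne_fun continuous_snd continuous_const) ?_
    exact isOpen_lt (continuous_norm.comp continuous_snd) continuous_const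
  have hc : ContinuousOn (gV r) {p : ℂ × ℂ | p.2 ≠ 0 ∧ ‖p.2‖ < r / 2} := by
    have q1 : Continuous fun p : ℂ × ℂ => (p.1 ^ 2 * (starRingEnd ℂ) p.2).re :=
      Complex.continuous_re.comp ((continuous_fst.pow 2).mul (Complex.continuous_conj.comp continuous_snd))
    have q2 : ContinuousOn (fun p : ℂ × ℂ => (p.1 ^ 2 * (starRingEnd ℂ) p.2).re / ‖p.2‖)
        {p : ℂ × ℂ | p.2 ≠ 0 ∧ ‖p.2‖ < r / 2} :=
      q1.continuousOn.div (by fun_prop) fun p hp => norm_ne_zero_iff.2 hp.1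
    have q3 : ContinuousOn (fun p : ℂ × ℂ => ‖p.1‖ ^ 2) {p : ℂ × ℂ | p.2 ≠ 0 ∧ ‖p.2‖ < r / 2} := by
      fun_prop
    unfold gV
    refine ContinuousOn.add ?_ ?_
    · refine ContinuousOn.div (continuousOn_const.mul ?_) (by fun_prop) ?_
      · exact Real.continuous_sqrt.comp_continuousOn ((q3.add q2).div_const 2)
      · intro p hp
        have := norm_nonneg p.2
        positivity
    · refine ContinuousOn.div (continuousOn_const.mul ?_) (by fun_prop) ?_
      · exact Real.continuous_sqrt.comp_continuousOn ((q3.sub q2).div_const 2)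
      · intro p hp
        have := hp.2
        linarith
  exact hc.isOpen_inter_preimage hs isOpen_Iio

theorem hull_main {r ε : ℝ} (hr : 0 < r) (hε : 0 < ε) {D : ℂ × ℂ → ℝ}
    (DL : ∀ y z, D y ≤ D z + ‖y - z‖)
    (DK : ∀ θ : ℝ, D (Rt θ (Real.sqrt r : ℝ) ((r / 2 : ℝ) : ℂ)) = 0)
    {A : Set (ℂ × ℂ)} (h0 : ∀ p ∈ Vset r, D p < ε → p ∈ A)
    (h1 : ∀ ξ ∈ A, ∀ ξ' ∈ A, ξ - ξ' ∈ cLam → ∀ t ∈ Set.Icc (0:ℝ) 1, t • ξ + (1 - t) • ξ' ∈ A) :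
    lamHull cLam (Vset r) ⊆ A := by
  refine lamHull_sub ?_ h1
  set s := Real.sqrt r with hs
  have sp : 0 < s := Real.sqrt_pos.2 hr
  have ss : s * s = r := Real.mul_self_sqrt hr.le
  have lam : ∀ (θ : ℝ) (z z' : ℂ) (c c' t : ℝ), Rt θ z c ∈ A → Rt θ z' c' ∈ A → z ≠ z' →
      ((z - z') ^ 2).im * (c - c') = 0 → t ∈ Set.Icc (0:ℝ) 1 →
      Rt θ (t * z + (1 - t) * z') ((t * c + (1 - t) * c' : ℝ) : ℂ) ∈ A := by
    intro θ z z' c c' t a b hz hi ht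
    have := h1 _ a _ b ?_ t ht
    · rw [Rt_comb] at this
      push_cast
      exact this
    · rw [Rt_sub]
      refine ⟨mul_ne_zero (sub_ne_zero.2 hz) (Complex.exp_ne_zero _), ?_⟩
      rw [Rt_inv, ← Complex.ofReal_sub, Complex.conj_ofReal, Complex.im_mul_ofReal]
      exact hi
  -- near K
  have S1 : ∀ τ : ℝ, 0 < τ → τ < r / 2 → τ < ε → 2 * τ / s < ε → ∀ θ : ℝ,
      Rt θ ((s - 2 * τ / s : ℝ) : ℂ) ((r / 2 - τ : ℝ) : ℂ) ∈ A := by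
    intro τ t0 t1 t2 t3 θ
    have ea : s - 2 * τ / s = (r - 2 * τ) / s := by rw [← ss]; field_simp
    have a0 : 0 < s - 2 * τ / s := by rw [ea]; exact div_pos (by linarith) sp
    apply h0
    · refine ⟨_, _, θ, ?_, ?_, ?_, rfl⟩
      · unfold fr
        rw [← hs, Complex.ofReal_re, Complex.ofReal_im, abs_zero, mul_zero, zero_div, add_zero,
          abs_of_pos a0, ea, div_lt_one (by linarith), mul_div_cancel₀ _ sp.ne']
        linarith
      · exact abs_pos.2 (by linarith)
      · rw [abs_of_pos (by linarith)]; linarith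
    · refine (DL _ (Rt θ (s : ℂ) ((r / 2 : ℝ) : ℂ))).trans_lt ?_
      rw [DK, Rt_sub, Rt_norm, zero_add, ← Complex.ofReal_sub, ← Complex.ofReal_sub,
        Complex.norm_real, Complex.norm_real]
      have e1 : s - 2 * τ / s - s = -(2 * τ / s) := by ring
      have e2 : r / 2 - τ - r / 2 = -τ := by ring
      rw [e1, e2, norm_neg, norm_neg, Real.norm_of_nonneg (by positivity), Real.norm_of_nonneg t0.le]
      exact max_lt t3 t2
  have S2 : ∀ τ : ℝ, 0 < τ → τ < r / 2 → τ < ε → 2 * τ / s < ε → ∀ (θ a : ℝ),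
      |a| ≤ s - 2 * τ / s → Rt θ (a : ℂ) ((r / 2 - τ : ℝ) : ℂ) ∈ A := by
    intro τ t0 t1 t2 t3 θ a ha
    have ea : s - 2 * τ / s = (r - 2 * τ) / s := by rw [← ss]; field_simp
    have a0 : 0 < s - 2 * τ / s := by rw [ea]; exact div_pos (by linarith) sp
    set a1 := s - 2 * τ / s with ha1
    have p1 := S1 τ t0 t1 t2 t3 θ
    have p2 := S1 τ t0 t1 t2 t3 (θ + Real.pi / 2 + Real.pi / 2)
    rw [Rt_half] at p2
    rw [← ha1] at p1 p2
    rw [abs_le] at ha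
    have ht : (a + a1) / (2 * a1) ∈ Set.Icc (0:ℝ) 1 := by
      constructor
      · exact div_nonneg (by linarith) (by linarith)
      · rw [div_le_one (by linarith)]; linarith
    have := lam θ _ _ _ _ ((a + a1) / (2 * a1)) p1 p2 ?_ (by simp) ht
    · convert this using 2
      · rw [← Complex.ofReal_neg, ← Complex.ofReal_mul, ← Complex.ofReal_one, ← Complex.ofReal_sub,
          ← Complex.ofReal_mul, ← Complex.ofReal_add]
        congr 1
        field_simp
        ring
      · congr 1; ring
    · intro h
      rw [← Complex.ofReal_neg, Complex.ofReal_inj] at h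
      linarith
  have S4 : ∀ (θ a c : ℝ), a ≠ 0 → |c| < r / 2 → s * |a| < r / 2 + c → Rt θ (a : ℂ) (c : ℂ) ∈ A := by
    intro θ a c ha hc hac
    have ha' : 0 < s * |a| := mul_pos sp (abs_pos.2 ha)
    have hc' := abs_lt.1 hc
    obtain ⟨τ, t0, t1, t2, t3, t4, t5⟩ : ∃ τ : ℝ, 0 < τ ∧ τ < r / 2 ∧ τ < ε ∧ 2 * τ / s < ε ∧
        τ ≤ r / 2 - c ∧ τ ≤ r / 2 + c - s * |a| := by
      refine ⟨min (min (r / 4) (ε / 2)) (min (ε * s / 4) (min (r / 2 - c) (r / 2 + c - s * |a|))),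
        ?_, ?_, ?_, ?_, ?_, ?_⟩
      · refine lt_min (lt_min (by positivity) (by positivity)) (lt_min (by positivity)
          (lt_min (by linarith) (by linarith)))
      · refine ((min_le_left _ _).trans (min_le_left _ _)).trans_lt (by linarith)
      · refine ((min_le_left _ _).trans (min_le_right _ _)).trans_lt (by linarith)
      · rw [div_lt_iff₀ sp]
        have := (min_le_right (min (r / 4) (ε / 2)) (min (ε * s / 4) (min (r / 2 - c) (r / 2 + c - s * |a|)))).trans
          (min_le_left _ _)
        have : 0 < ε * s := by positivity
        linarith
      · exact (min_le_right _ _).trans ((min_le_right _ _).trans (min_le_left _ _))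
      · exact (min_le_right _ _).trans ((min_le_right _ _).trans (min_le_right _ _))
    have ea : s - 2 * τ / s = (r - 2 * τ) / s := by rw [← ss]; field_simp
    set c1 := r / 2 - τ with hc1
    have c1p : 0 < c1 := by rw [hc1]; linarith
    have lp : 0 < c + c1 := by rw [hc1]; linarith
    set l := (c + c1) / (2 * c1) with hl
    have l0 : 0 < l := by positivity
    have l1 : l ≤ 1 := by rw [hl, div_le_one (by positivity), hc1]; linarith
    have hal : |a / l| ≤ s - 2 * τ / s := by
      rw [abs_div, abs_of_pos l0, div_le_iff₀ l0, ea, hl]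
      have : (r - 2 * τ) / s * ((c + c1) / (2 * c1)) = (c + c1) / s := by
        have : r - 2 * τ = 2 * c1 := by rw [hc1]; ring
        rw [this]; field_simp
      rw [this, le_div_iff₀ sp]
      rw [hc1]; linarith
    have p1 := S2 τ t0 t1 t2 t3 θ (a / l) hal
    have p2 := S2 τ t0 t1 t2 t3 (θ + Real.pi / 2) 0 (by
      rw [abs_zero, ea]; exact (div_pos (by linarith) sp).le)
    rw [Rt_quarter, ← Complex.ofReal_neg] at p2
    have := lam θ _ _ _ _ l p1 p2 ?_ ?_ ⟨l0.le, l1⟩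
    · convert this using 2
      · push_cast
        have : (l : ℂ) ≠ 0 := by exact_mod_cast l0.ne'
        field_simp
        simp
      · congr 1
        rw [← hc1, hl]; field_simp; ring
    · intro h
      have : a / l = 0 := by
        simp only [Complex.ofReal_zero, mul_zero] at h
        exact_mod_cast h
      rw [div_eq_zero_iff] at this
      rcases this with h | h
      · exact ha h
      · exact l0.ne' h
    · simp only [Complex.ofReal_zero, mul_zero, sub_zero]
      rw [← Complex.ofReal_pow, Complex.ofReal_im, zero_mul]
  have S5 : ∀ (θ a c : ℝ), |c| < r / 2 → s * |a| < r / 2 + c → Rt θ (a : ℂ) (c : ℂ) ∈ A := by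
    intro θ a c hc hac
    by_cases ha : a = 0
    · have hc' := abs_lt.1 hc
      set d := (r / 2 + c) / (2 * s) with hd
      have dp : 0 < d := div_pos (by linarith) (by linarith)
      have hd1 : s * d < r / 2 + c := by
        have : s * d = (r / 2 + c) / 2 := by rw [hd]; field_simp
        rw [this]; linarith
      have p1 := S4 θ d c dp.ne' hc (by rw [abs_of_pos dp]; exact hd1)
      have p2 := S4 θ (-d) c (by linarith [dp] : -d < 0).ne hc (by rw [abs_neg, abs_of_pos dp]; exact hd1)
      have := lam θ _ _ _ _ (1 / 2) p1 p2 ?_ (by simp) (by norm_num)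
      · convert this using 2
        · rw [ha]; push_cast; ring
        · congr 1; ring
      · intro h
        rw [Complex.ofReal_inj] at h
        linarith
    · exact S4 θ a c ha hc hac
  have S6 : ∀ (θ b c : ℝ), |c| < r / 2 → s * |b| < r / 2 - c →
      Rt θ (Complex.I * b) (c : ℂ) ∈ A := by
    intro θ b c hc hbc
    have := S5 (θ + Real.pi / 2) b (-c) (by rwa [abs_neg]) (by linarith)
    rw [Rt_quarter] at this
    simpa using this
  rintro p ⟨z, c, θ, hf, -, hc, hp⟩
  have hp' : p = Rt θ z c := hp
  rw [hp']
  have hc' := abs_lt.1 hc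
  have α : 0 < r / 2 + c := by linarith
  have β : 0 < r / 2 - c := by linarith
  unfold fr at hf
  rw [← hs] at hf
  have hz : z = z.re + Complex.I * z.im := by
    have := Complex.re_add_im z
    rw [mul_comm Complex.I]; exact this.symm
  set x := s * |z.re| / (r / 2 + c) with hx
  set y := s * |z.im| / (r / 2 - c) with hy
  have x0 : 0 ≤ x := by positivity
  have y0 : 0 ≤ y := by positivity
  have ex : s * |z.re| = x * (r / 2 + c) := by rw [hx, div_mul_cancel₀ _ α.ne']
  have ey : s * |z.im| = y * (r / 2 - c) := by rw [hy, div_mul_cancel₀ _ β.ne']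
  by_cases ha : z.re = 0
  · have := S6 θ z.im c hc (by rw [ey]; nlinarith)
    rw [hz, ha]; simpa using this
  set l := (x + (1 - y)) / 2 with hl
  have xp : 0 < x := by
    have := abs_pos.2 ha
    positivity
  have l0 : 0 < l := by rw [hl]; linarith
  have l1 : l < 1 := by rw [hl]; linarith
  have p1 := S5 θ (z.re / l) c hc (by
    rw [abs_div, abs_of_pos l0, ← mul_div_assoc, ex, div_lt_iff₀ l0]
    rw [mul_comm]
    exact mul_lt_mul_of_pos_left (by rw [hl]; linarith) α)
  have p2 := S6 θ (z.im / (1 - l)) c hc (by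
    rw [abs_div, abs_of_pos (by linarith : 0 < 1 - l), ← mul_div_assoc, ey, div_lt_iff₀ (by linarith)]
    rw [mul_comm]
    exact mul_lt_mul_of_pos_left (by rw [hl]; linarith) β)
  have := lam θ _ _ _ _ l p1 p2 ?_ (by simp) ⟨l0.le, l1.le⟩
  · convert this using 2
    · have e1 : (l : ℂ) ≠ 0 := by exact_mod_cast l0.ne'
      have e2 : (1 - l : ℂ) ≠ 0 := by
        have : ((1 - l : ℝ) : ℂ) ≠ 0 := Complex.ofReal_ne_zero.2 (by linarith)
        simpa using this
      conv_lhs => rw [hz]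
      push_cast
      field_simp
    · congr 1; ring
  · intro h
    have := congrArg Complex.re h
    simp only [Complex.ofReal_re, Complex.mul_re, Complex.I_re, Complex.I_im, Complex.ofReal_im] at this
    have h2 : z.re / l = 0 := by linarith
    rw [div_eq_zero_iff] at h2
    rcases h2 with h | h
    · exact ha h
    · exact l0.ne' h

theorem good_hull {r ε κ : ℝ} (hr : 0 < r) (hε : 0 < ε) (hκ : 0 < κ) {D : ℂ × ℂ → ℝ}
    (D0 : ∀ y, 0 ≤ D y) (DL : ∀ y z, D y ≤ D z + ‖y - z‖)
    (DK : ∀ θ : ℝ, D (Rt θ (Real.sqrt r : ℝ) ((r / 2 : ℝ) : ℂ)) = 0) {p : ℂ × ℂ}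
    (hp : p ∈ lamHull cLam (Vset r)) : Good (lamHull cLam (Vset r)) D κ ε p := by
  have hO : IsOpen (lamHull cLam (Vset r)) := lamHull_open (Vset_open hr)
  have key := hull_main hr hε DL DK
    (A := {p | p ∈ lamHull cLam (Vset r) ∧ Good (lamHull cLam (Vset r)) D κ ε p}) ?_ ?_
  · exact (key hp).2
  · intro p hp hD
    have hp' : p ∈ lamHull cLam (Vset r) := Set.mem_iUnion.2 ⟨0, hp⟩
    refine ⟨hp', fun _ => 0, fun _ => 0, ?_⟩
    have e : ∀ i : Fin 2, pd i (fun _ : Vec 2 => (0 : ℝ)) = fun _ => 0 := by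
      intro i; funext x; simp [pd]
    have zz : ∀ x, Wst (fun _ => 0) (fun _ => 0) x = 0 := by
      intro x
      unfold Wst
      simp only [e]
      refine Prod.ext ?_ ?_ <;> apply Complex.ext <;> simp
    obtain ⟨ρ, ρp, hρ⟩ := Metric.isOpen_iff.1 hO p hp'
    have := Qh_prob
    refine ⟨min (ρ / 2) ε, tst_zero, tst_zero, by positivity, min_le_right _ _, ?_, ?_, ?_⟩
    · intro x v hv
      rw [zz, add_zero]
      apply hρ
      rw [Metric.mem_ball, dist_eq_norm, add_sub_cancel_left]
      linarith [hv.trans (min_le_left _ _)]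
    · intro x i j
      simp only [e, abs_zero]
      positivity
    · simp only [zz, add_zero]
      rw [integral_const]
      simpa using hD
  · rintro ξ ⟨a, b⟩ ξ' ⟨a', b'⟩ hL t ht
    refine ⟨lamHull_lam a a' hL ht, good_step hO D0 DL hκ b b' hL ?_ ht⟩
    intro q hq
    have := lamHull_lam a a' hL hq
    convert this using 1
    module

/-- inverse of `toC` -/
def fromC (p : ℂ × ℂ) : Vec 2 × S0 2 :=
  (![p.1.re, p.1.im], ⟨![![p.2.re, p.2.im], ![p.2.im, -p.2.re]], by
    refine ⟨?_, ?_⟩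
    · intro i j
      fin_cases i <;> fin_cases j <;> simp
    · simp [Fin.sum_univ_two]⟩)

theorem fromC_toC (w : Vec 2 × S0 2) : fromC (toC w) = w := by
  obtain ⟨v, U, hU1, hU2⟩ := w
  refine Prod.ext ?_ ?_
  · funext i
    fin_cases i <;> simp [fromC, toC]
  · apply Subtype.ext
    funext i j
    rw [Fin.sum_univ_two] at hU2
    have h01 := hU1 0 1
    have h11 : -U 0 0 = U 1 1 := by linarith
    fin_cases i <;> fin_cases j <;> simp [fromC, toC, h01, h11]

theorem fromC_dist (y z : ℂ × ℂ) : dist (fromC y) (fromC z) ≤ ‖y - z‖ := by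
  have a := Complex.abs_re_le_norm (y.1 - z.1)
  have b := Complex.abs_im_le_norm (y.1 - z.1)
  have c := Complex.abs_re_le_norm (y.2 - z.2)
  have d := Complex.abs_im_le_norm (y.2 - z.2)
  have n1 : ‖y.1 - z.1‖ ≤ ‖y - z‖ := norm_fst_le (y - z)
  have n2 : ‖y.2 - z.2‖ ≤ ‖y - z‖ := norm_snd_le (y - z)
  rw [Complex.sub_re] at a c
  rw [Complex.sub_im] at b d
  rw [Prod.dist_eq]
  refine max_le ?_ ?_
  · rw [dist_pi_le_iff (norm_nonneg _)]
    intro i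
    fin_cases i
    · simpa [fromC, Real.dist_eq] using a.trans n1
    · simpa [fromC, Real.dist_eq] using b.trans n1
  · rw [Subtype.dist_eq, dist_pi_le_iff (norm_nonneg _)]
    intro i
    rw [dist_pi_le_iff (norm_nonneg _)]
    intro j
    have c' : |-y.2.re - -z.2.re| ≤ ‖y.2 - z.2‖ := by
      rw [neg_sub_neg, abs_sub_comm]; exact c
    fin_cases i <;> fin_cases j
    · simpa [fromC, Real.dist_eq] using c.trans n2
    · simpa [fromC, Real.dist_eq] using d.trans n2
    · simpa [fromC, Real.dist_eq] using d.trans n2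
    · show dist (-y.2.re) (-z.2.re) ≤ _
      rw [Real.dist_eq]
      exact c'.trans n2

/-- distance to `K_r` in complex coordinates -/
def DK (r : ℝ) (p : ℂ × ℂ) : ℝ := Metric.infDist (fromC p) (Kset 2 r)

theorem DK_nonneg (r : ℝ) (p : ℂ × ℂ) : 0 ≤ DK r p := Metric.infDist_nonneg

theorem DK_lip (r : ℝ) (y z : ℂ × ℂ) : DK r y ≤ DK r z + ‖y - z‖ :=
  (Metric.infDist_le_infDist_add_dist).trans (by
    have := fromC_dist y z
    unfold DK
    linarith)

theorem DK_zero {r : ℝ} (hr : 0 < r) (θ : ℝ) :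
    DK r (Rt θ (Real.sqrt r : ℝ) ((r / 2 : ℝ) : ℂ)) = 0 := by
  apply Metric.infDist_zero_of_mem
  have ss : Real.sqrt r * Real.sqrt r = r := Real.mul_self_sqrt hr.le
  have hcs := Real.sin_sq_add_cos_sq θ
  have e1 : Complex.exp (θ * Complex.I) = ⟨Real.cos θ, Real.sin θ⟩ := by
    apply Complex.ext
    · rw [Complex.exp_ofReal_mul_I_re]
    · rw [Complex.exp_ofReal_mul_I_im]
  intro i j
  have e : (Rt θ (Real.sqrt r : ℝ) ((r / 2 : ℝ) : ℂ)) =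
      (⟨Real.sqrt r * Real.cos θ, Real.sqrt r * Real.sin θ⟩,
       ⟨r / 2 * (Real.cos θ ^ 2 - Real.sin θ ^ 2), r * (Real.cos θ * Real.sin θ)⟩) := by
    unfold Rt
    rw [exp_two, e1]
    refine Prod.ext ?_ ?_ <;> apply Complex.ext <;> simp [pow_two] <;> ring
  rw [e]
  fin_cases i <;> fin_cases j <;> simp [fromC]
  · linear_combination (-(Real.cos θ ^ 2)) * ss - r / 2 * hcs
  · linear_combination (-(Real.cos θ * Real.sin θ)) * ss
  · linear_combination (-(Real.cos θ * Real.sin θ)) * ss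
  · linear_combination (-(Real.sin θ ^ 2)) * ss - r / 2 * hcs

theorem part_two {r r' : ℝ} (hr : 0 < r) (h : r < r') : Kset 2 r ⊆ Uset r' := by
  rintro ⟨v, U, hU1, hU2⟩ hw
  have h00 : U 0 0 = v 0 * v 0 - r / 2 := by simpa using hw 0 0
  have h01 : U 0 1 = v 0 * v 1 := by simpa using hw 0 1
  have h11 : U 1 1 = v 1 * v 1 - r / 2 := by simpa using hw 1 1
  have hU2c : U 0 0 + U 1 1 = 0 := by simpa [Fin.sum_univ_two] using hU2
  have hv : v 0 * v 0 + v 1 * v 1 = r := by linarith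
  refine Set.mem_iUnion.2 ⟨0, ?_⟩
  show _ ∈ Vset r'
  rw [Vset_eq]
  have e : toC (v, ⟨U, hU1, hU2⟩) = (⟨v 0, v 1⟩, ⟨(v 0 * v 0 - v 1 * v 1) / 2, v 0 * v 1⟩) := by
    unfold toC
    refine Prod.ext ?_ ?_ <;> apply Complex.ext <;> simp [h00, h01]
    linarith
  rw [e]
  set p : ℂ × ℂ := (⟨v 0, v 1⟩, ⟨(v 0 * v 0 - v 1 * v 1) / 2, v 0 * v 1⟩) with hp
  have n1 : ‖p.1‖ ^ 2 = r := by
    rw [← Complex.normSq_eq_norm_sq, Complex.normSq_apply]; exact hv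
  have n2' : ‖p.2‖ ^ 2 = (r / 2) ^ 2 := by
    rw [← Complex.normSq_eq_norm_sq, Complex.normSq_apply]
    simp only [hp]
    rw [← hv]; ring
  have n2 : ‖p.2‖ = r / 2 := by
    rwa [sq_eq_sq₀ (norm_nonneg _) (by positivity)] at n2'
  have n3 : (p.1 ^ 2 * (starRingEnd ℂ) p.2).re / ‖p.2‖ = r := by
    have : (p.1 ^ 2 * (starRingEnd ℂ) p.2).re = r ^ 2 / 2 := by
      simp [hp, pow_two]
      rw [← hv]; ring
    rw [this, n2]; field_simp
  refine ⟨⟨?_, by rw [n2]; linarith⟩, ?_⟩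
  · rw [← norm_pos_iff, n2]; linarith
  · unfold gV
    rw [n3, n1, n2, sub_self, zero_div, Real.sqrt_zero, mul_zero, zero_div, add_zero,
      div_lt_one (by linarith), add_self_div_two]
    have s1 := Real.mul_self_sqrt hr.le
    have s2 := Real.mul_self_sqrt (hr.trans h).le
    have s3 := Real.sqrt_lt_sqrt hr.le h
    nlinarith [mul_pos (sub_pos.2 s3) (sub_pos.2 s3)]

/-- linear combinations of second derivatives of the potentials -/
def cmb (φ χ : Vec 2 → ℝ) (c : Fin 6 → ℝ) (x : Vec 2) : ℝ :=
  c 0 * pd 0 (pd 0 χ) x + c 1 * pd 0 (pd 1 χ) x + c 2 * pd 1 (pd 1 χ) x +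
  c 3 * pd 0 (pd 0 φ) x + c 4 * pd 0 (pd 1 φ) x + c 5 * pd 1 (pd 1 φ) x

theorem cmb_tst {φ χ : Vec 2 → ℝ} (hφ : Tst φ) (hχ : Tst χ) (c : Fin 6 → ℝ) : Tst (cmb φ χ c) :=
  (((((((hχ.pd 0).pd 0).cmul _).add (((hχ.pd 1).pd 0).cmul _)).add (((hχ.pd 1).pd 1).cmul _)).add
    (((hφ.pd 0).pd 0).cmul _)).add (((hφ.pd 1).pd 0).cmul _)).add (((hφ.pd 1).pd 1).cmul _)

theorem pd_lc6 {f1 f2 f3 f4 f5 f6 : Vec 2 → ℝ} (h1 : Tst f1) (h2 : Tst f2) (h3 : Tst f3)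
    (h4 : Tst f4) (h5 : Tst f5) (h6 : Tst f6) (c1 c2 c3 c4 c5 c6 : ℝ) (i : Fin 2) (x : Vec 2) :
    pd i (fun x => c1 * f1 x + c2 * f2 x + c3 * f3 x + c4 * f4 x + c5 * f5 x + c6 * f6 x) x =
    c1 * pd i f1 x + c2 * pd i f2 x + c3 * pd i f3 x + c4 * pd i f4 x + c5 * pd i f5 x +
      c6 * pd i f6 x := by
  have t1 := h1.cmul c1
  have t2 := h2.cmul c2
  have t3 := h3.cmul c3
  have t4 := h4.cmul c4
  have t5 := h5.cmul c5
  have t6 := h6.cmul c6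
  rw [pd_add ((((t1.add t2).add t3).add t4).add t5).sm t6.sm,
    pd_add (((t1.add t2).add t3).add t4).sm t5.sm, pd_add ((t1.add t2).add t3).sm t4.sm,
    pd_add (t1.add t2).sm t3.sm, pd_add t1.sm t2.sm, pd_cmul h1.sm, pd_cmul h2.sm, pd_cmul h3.sm,
    pd_cmul h4.sm, pd_cmul h5.sm, pd_cmul h6.sm]

theorem cmb_pd {φ χ : Vec 2 → ℝ} (hφ : Tst φ) (hχ : Tst χ) (c : Fin 6 → ℝ) (i : Fin 2) (x : Vec 2) :
    pd i (cmb φ χ c) x =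
      c 0 * pd i (pd 0 (pd 0 χ)) x + c 1 * pd i (pd 0 (pd 1 χ)) x + c 2 * pd i (pd 1 (pd 1 χ)) x +
      c 3 * pd i (pd 0 (pd 0 φ)) x + c 4 * pd i (pd 0 (pd 1 φ)) x + c 5 * pd i (pd 1 (pd 1 φ)) x :=
  pd_lc6 ((hχ.pd 0).pd 0) ((hχ.pd 1).pd 0) ((hχ.pd 1).pd 1) ((hφ.pd 0).pd 0) ((hφ.pd 1).pd 0)
    ((hφ.pd 1).pd 1) _ _ _ _ _ _ i x

theorem cmb_eq_pd {φ χ : Vec 2 → ℝ} (hφ : Tst φ) (hχ : Tst χ) (c : Fin 6 → ℝ) :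
    cmb φ χ c = fun x => pd 0 (fun x => c 0 * pd 0 χ x + c 1 * pd 1 χ x + 0 * χ x + c 3 * pd 0 φ x +
      c 4 * pd 1 φ x + 0 * φ x) x + pd 1 (fun x => c 2 * pd 1 χ x + 0 * χ x + 0 * χ x + c 5 * pd 1 φ x +
      0 * χ x + 0 * χ x) x := by
  funext x
  rw [pd_lc6 (hχ.pd 0) (hχ.pd 1) hχ (hφ.pd 0) (hφ.pd 1) hφ,
    pd_lc6 (hχ.pd 1) hχ hχ (hφ.pd 1) hχ hχ]
  unfold cmb
  ring

theorem lc6_tst {f1 f2 f3 f4 f5 f6 : Vec 2 → ℝ} (h1 : Tst f1) (h2 : Tst f2) (h3 : Tst f3)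
    (h4 : Tst f4) (h5 : Tst f5) (h6 : Tst f6) (c1 c2 c3 c4 c5 c6 : ℝ) :
    Tst (fun x => c1 * f1 x + c2 * f2 x + c3 * f3 x + c4 * f4 x + c5 * f5 x + c6 * f6 x) :=
  (((((h1.cmul c1).add (h2.cmul c2)).add (h3.cmul c3)).add (h4.cmul c4)).add (h5.cmul c5)).add
    (h6.cmul c6)

theorem cmb_int {φ χ : Vec 2 → ℝ} (hφ : Tst φ) (hχ : Tst χ) (c : Fin 6 → ℝ) :
    ∫ x in unitSquare, cmb φ χ c x = 0 := by
  rw [(cmb_tst hφ hχ c).integral_sq, cmb_eq_pd hφ hχ]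
  have t1 := lc6_tst (hχ.pd 0) (hχ.pd 1) hχ (hφ.pd 0) (hφ.pd 1) hφ (c 0) (c 1) 0 (c 3) (c 4) 0
  have t2 := lc6_tst (hχ.pd 1) hχ hχ (hφ.pd 1) hχ hχ (c 2) 0 0 (c 5) 0 0
  rw [integral_add (t1.pd 0).integrable (t2.pd 1).integrable, t1.integral_pd, t2.integral_pd, add_zero]

theorem supp_helper {E : Type*} [Zero E] {f : Vec 2 → E} {K : Set (Vec 2)} (hK : IsCompact K)
    (hs : K ⊆ unitSquare) (h : ∀ x, x ∉ K → f x = 0) :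
    HasCompactSupport f ∧ tsupport f ⊆ unitSquare := by
  refine ⟨HasCompactSupport.intro hK fun x hx => h x hx, ?_⟩
  refine (closure_minimal ?_ hK.isClosed).trans hs
  intro x hx
  by_contra hc
  exact hx (h x hc)


theorem int_bound {s b ε : ℝ} (hs : 0 ≤ s) (hb : b ≤ ε) (hε : 8 * s * ε ≤ s ^ 2) {G F n : Vec 2 → ℝ}
    (hG : Continuous G) (hF : Continuous F) (h1 : ∀ x, s ≤ G x + b + n x)
    (h2 : ∀ x, n x ^ 2 ≤ F x) (h3 : ∫ x in Qh, G x < ε) :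
    s ^ 2 / 2 ≤ ∫ x in unitSquare, F x := by
  have := Qh_prob
  rw [setIntegral_congr_set Qh_ae]
  have hp : ∀ x, s ^ 2 - 2 * s * b - 2 * s * G x ≤ F x := by
    intro x
    nlinarith [h1 x, h2 x, sq_nonneg (n x - s), mul_le_mul_of_nonneg_left (h1 x) hs]
  have i1 : IntegrableOn (fun x => 2 * s * G x) Qh := intOn_Qh (by fun_prop)
  have i0 : IntegrableOn (fun _ => s ^ 2 - 2 * s * b) Qh := intOn_Qh (by fun_prop)
  have key : ∫ x in Qh, (s ^ 2 - 2 * s * b - 2 * s * G x) ≤ ∫ x in Qh, F x :=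
    integral_mono (i0.sub i1) (intOn_Qh hF) hp
  rw [integral_sub i0 i1, integral_const, integral_const_mul] at key
  simp only [probReal_univ, one_smul] at key
  nlinarith [mul_le_mul_of_nonneg_left hb hs, mul_le_mul_of_nonneg_left h3.le hs]

theorem pde_x {φ χ : Vec 2 → ℝ} (hφ : Tst φ) (hχ : Tst χ) (a b c g : ℝ) (x : Vec 2) :
    (pd 0 (cmb φ χ ![-1/2,0,1/2,b,-2*a,b]) x + pd 1 (cmb φ χ ![0,-1,0,c+a,0,c-a]) x) +
      pd 0 (cmb φ χ ![1/2,0,1/2,g,0,g]) x =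
    (a - c) * (-(pd 1 (pd 0 (pd 0 φ)) x + pd 1 (pd 1 (pd 1 φ)) x)) +
      (b + g) * (pd 0 (pd 0 (pd 0 φ)) x + pd 0 (pd 1 (pd 1 φ)) x) ∧
    (pd 0 (cmb φ χ ![0,-1,0,c+a,0,c-a]) x + -pd 1 (cmb φ χ ![-1/2,0,1/2,b,-2*a,b]) x) +
      pd 1 (cmb φ χ ![1/2,0,1/2,g,0,g]) x =
    (b - g) * (-(pd 1 (pd 0 (pd 0 φ)) x + pd 1 (pd 1 (pd 1 φ)) x)) +
      (a + c) * (pd 0 (pd 0 (pd 0 φ)) x + pd 0 (pd 1 (pd 1 φ)) x) := by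
  have A : ∀ f, Tst f → pd 1 (pd 0 (pd 0 f)) x = pd 0 (pd 0 (pd 1 f)) x := by
    intro f hf
    rw [pd_comm (hf.sm.pd 0) 1 0, pd_comm hf.sm 1 0]
  have B : ∀ f, Tst f → pd 1 (pd 0 (pd 1 f)) x = pd 0 (pd 1 (pd 1 f)) x := by
    intro f hf
    rw [pd_comm (hf.sm.pd 1) 1 0]
  simp only [cmb_pd hφ hχ]
  rw [A φ hφ, A χ hχ, B φ hφ, B χ hχ]
  simp [Matrix.cons_val]
  constructor <;> ring


theorem e_bound {a b c κ t p00 p01 p11 : ℝ} (hκ : κ = 1 / (2 * |b| + 2 * |c| + 4 * |a| + 1))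
    (ht : 0 < t) (h00 : |p00| ≤ κ * t) (h01 : |p01| ≤ κ * t) (h11 : |p11| ≤ κ * t) :
    ‖((0, ⟨b * p00 - 2 * a * p01 + b * p11, (c + a) * p00 + (c - a) * p11⟩) : ℂ × ℂ)‖ ≤ t := by
  have a0 := abs_nonneg a
  have b0 := abs_nonneg b
  have c0 := abs_nonneg c
  have hk : (2 * |b| + 2 * |c| + 4 * |a| + 1) * (κ * t) = t := by
    rw [hκ]; field_simp
  have kt : 0 ≤ κ * t := (abs_nonneg _).trans h00
  rw [Prod.norm_mk, norm_zero]
  refine max_le ht.le ((Complex.norm_le_abs_re_add_abs_im _).trans ?_)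
  have P : ∀ u y : ℝ, |y| ≤ κ * t → |u * y| ≤ |u| * (κ * t) := fun u y hy => by
    rw [abs_mul]; exact mul_le_mul_of_nonneg_left hy (abs_nonneg u)
  have q1 := abs_le.1 (P b p00 h00)
  have q2 := abs_le.1 (P a p01 h01)
  have q3 := abs_le.1 (P b p11 h11)
  have q4 := abs_le.1 (P c p00 h00)
  have q5 := abs_le.1 (P a p00 h00)
  have q6 := abs_le.1 (P c p11 h11)
  have q7 := abs_le.1 (P a p11 h11)
  have r1 : |b * p00 - 2 * a * p01 + b * p11| ≤ (2 * |b| + 2 * |a|) * (κ * t) := by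
    rw [abs_le]; constructor <;> nlinarith
  have r2 : |(c + a) * p00 + (c - a) * p11| ≤ (2 * |c| + 2 * |a|) * (κ * t) := by
    rw [abs_le]; constructor <;> nlinarith
  show |b * p00 - 2 * a * p01 + b * p11| + |(c + a) * p00 + (c - a) * p11| ≤ t
  nlinarith

theorem norm_sq_le (y : ℂ × ℂ) : ‖y‖ ^ 2 ≤ (y.1.re ^ 2 + y.1.im ^ 2) + 2 * (y.2.re ^ 2 + y.2.im ^ 2) := by
  have h1 : ‖y.1‖ ^ 2 = y.1.re ^ 2 + y.1.im ^ 2 := by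
    rw [← Complex.normSq_eq_norm_sq, Complex.normSq_apply]; ring
  have h2 : ‖y.2‖ ^ 2 = y.2.re ^ 2 + y.2.im ^ 2 := by
    rw [← Complex.normSq_eq_norm_sq, Complex.normSq_apply]; ring
  rw [← h1, ← h2, Prod.norm_def]
  rcases max_choice ‖y.1‖ ‖y.2‖ with h | h <;> rw [h] <;> nlinarith [sq_nonneg ‖y.1‖, sq_nonneg ‖y.2‖]

theorem part_one (B : Mat 2) (r : ℝ) (hr : 0 < r) (wb : Vec 2 × S0 2) (hwb : wb ∈ Uset r) :
        ∃ (v : Vec 2 → Vec 2) (U : Vec 2 → Mat 2) (q : Vec 2 → ℝ)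
          (hU : ∀ x, U x ∈ S0 2),
          ContDiff ℝ (⊤ : ℕ∞) v ∧
          (∀ i j, ContDiff ℝ (⊤ : ℕ∞) (fun x => U x i j)) ∧
          ContDiff ℝ (⊤ : ℕ∞) q ∧
          HasCompactSupport v ∧ tsupport v ⊆ unitSquare ∧
          HasCompactSupport U ∧ tsupport U ⊆ unitSquare ∧
          HasCompactSupport q ∧ tsupport q ⊆ unitSquare ∧
          (∀ x i, (∑ j, pd j (fun y => U y i j) x) + pd i q x = ∑ j, B i j * v x j) ∧
          (∀ x, ∑ i, pd i (fun y => v y i) x = 0) ∧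
          (∀ x ∈ unitSquare, (wb.1 + v x, wb.2 + (⟨U x, hU x⟩ : S0 2)) ∈ Uset r) ∧
          ((∫ x in unitSquare, ((∑ i, (v x i) ^ 2) + ∑ i, ∑ j, (U x i j) ^ 2))
            ≥ (Metric.infDist wb (Kset 2 r)) ^ 2 / 2) ∧
          (∀ i, (∫ x in unitSquare, v x i) = 0) ∧
          (∀ i j, (∫ x in unitSquare, U x i j) = 0) := by
  set s := Metric.infDist wb (Kset 2 r) with hs
  have hsD : s = DK r (toC wb) := by rw [DK, fromC_toC]
  have s0 : 0 ≤ s := Metric.infDist_nonneg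
  obtain ⟨ε, hε, hsε⟩ : ∃ ε : ℝ, 0 < ε ∧ 8 * s * ε ≤ s ^ 2 := by
    rcases s0.eq_or_lt with h | h
    · exact ⟨1, one_pos, by rw [← h]; norm_num⟩
    · exact ⟨s / 8, by positivity, le_of_eq (by ring)⟩
  obtain ⟨a, b, c, g, hB00, hB01, hB10, hB11⟩ : ∃ a b c g : ℝ,
      B 0 0 = a - c ∧ B 0 1 = b + g ∧ B 1 0 = b - g ∧ B 1 1 = a + c :=
    ⟨(B 0 0 + B 1 1) / 2, (B 0 1 + B 1 0) / 2, (B 1 1 - B 0 0) / 2, (B 0 1 - B 1 0) / 2,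
      by ring, by ring, by ring, by ring⟩
  obtain ⟨κ, hκ⟩ : ∃ κ : ℝ, κ = 1 / (2 * |b| + 2 * |c| + 4 * |a| + 1) := ⟨_, rfl⟩
  have κ0 : 0 < κ := by rw [hκ]; positivity
  obtain ⟨φ, χ, t, hφ, hχ, t0, tε, hin, hpd, hint⟩ :=
    good_hull hr hε κ0 (DK_nonneg r) (DK_lip r) (DK_zero hr) (p := toC wb) hwb
  set p := toC wb with hp
  have hL : Tst (fun x => pd 0 (pd 0 φ) x + pd 1 (pd 1 φ) x) :=
    ((hφ.pd 0).pd 0).add ((hφ.pd 1).pd 1)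
  set L : Vec 2 → ℝ := fun x => pd 0 (pd 0 φ) x + pd 1 (pd 1 φ) x with hLdef
  have Lpd : ∀ i, pd i L = fun x => pd i (pd 0 (pd 0 φ)) x + pd i (pd 1 (pd 1 φ)) x :=
    fun i => pd_add ((hφ.pd 0).pd 0).sm ((hφ.pd 1).pd 1).sm i
  have hu := cmb_tst hφ hχ ![-1/2,0,1/2,b,-2*a,b]
  have hw := cmb_tst hφ hχ ![0,-1,0,c+a,0,c-a]
  have hq := cmb_tst hφ hχ ![1/2,0,1/2,g,0,g]
  have hpde := pde_x hφ hχ a b c g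
  have iu := cmb_int hφ hχ ![-1/2,0,1/2,b,-2*a,b]
  have iw := cmb_int hφ hχ ![0,-1,0,c+a,0,c-a]
  let e : Vec 2 → ℂ × ℂ := fun x => (0, ⟨b * pd 0 (pd 0 φ) x - 2 * a * pd 0 (pd 1 φ) x +
    b * pd 1 (pd 1 φ) x, (c + a) * pd 0 (pd 0 φ) x + (c - a) * pd 1 (pd 1 φ) x⟩)
  have he : ∀ x, ‖e x‖ ≤ t := fun x => e_bound hκ t0 (hpd x 0 0) (hpd x 0 1) (hpd x 1 1)
  have hWe : ∀ x, Wst φ χ x + e x = (⟨-pd 1 L x, pd 0 L x⟩,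
      ⟨cmb φ χ ![-1/2,0,1/2,b,-2*a,b] x, cmb φ χ ![0,-1,0,c+a,0,c-a] x⟩) := by
    intro x
    rw [Lpd, Lpd]
    refine Prod.ext ?_ ?_ <;> apply Complex.ext <;>
      simp [Wst, e, cmb, Matrix.cons_val] <;> ring
  set u := cmb φ χ ![-1/2,0,1/2,b,-2*a,b] with hudef
  set w := cmb φ χ ![0,-1,0,c+a,0,c-a] with hwdef
  set q := cmb φ χ ![1/2,0,1/2,g,0,g] with hqdef
  have hL0 := hL.pd 0
  have hL1 := hL.pd 1
  have cL0 : Continuous (pd 0 L) := hL0.sm.continuous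
  have cL1 : Continuous (pd 1 L) := hL1.sm.continuous
  have cu : Continuous u := hu.sm.continuous
  have cw : Continuous w := hw.sm.continuous
  have hU : ∀ x, (![![u x, w x], ![w x, -u x]] : Mat 2) ∈ S0 2 := by
    intro x
    refine ⟨?_, ?_⟩
    · intro i j
      fin_cases i <;> fin_cases j <;> simp
    · simp [Fin.sum_univ_two]
  have sv := supp_helper (f := fun x => (![-pd 1 L x, pd 0 L x] : Vec 2))
    (hL1.cs.isCompact.union hL0.cs.isCompact) (Set.union_subset hL1.sub hL0.sub) (by
      intro x hx
      rw [Set.mem_union, not_or] at hx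
      have h1 := image_eq_zero_of_notMem_tsupport hx.1
      have h2 := image_eq_zero_of_notMem_tsupport hx.2
      funext i
      fin_cases i <;> simp [h1, h2])
  have sU := supp_helper (f := fun x => (![![u x, w x], ![w x, -u x]] : Mat 2))
    (hu.cs.isCompact.union hw.cs.isCompact) (Set.union_subset hu.sub hw.sub) (by
      intro x hx
      rw [Set.mem_union, not_or] at hx
      have h1 := image_eq_zero_of_notMem_tsupport hx.1
      have h2 := image_eq_zero_of_notMem_tsupport hx.2
      funext i j
      fin_cases i <;> fin_cases j <;> simp [h1, h2])
  refine ⟨fun x => ![-pd 1 L x, pd 0 L x], fun x => ![![u x, w x], ![w x, -u x]], q, hU,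
    ?_, ?_, hq.sm, sv.1, sv.2, sU.1, sU.2, hq.cs, hq.sub, ?_, ?_, ?_, ?_, ?_, ?_⟩
  · rw [contDiff_pi]
    intro i
    fin_cases i
    · exact ContDiff.neg hL1.sm
    · exact hL0.sm
  · intro i j
    fin_cases i <;> fin_cases j
    · exact hu.sm
    · exact hw.sm
    · exact hw.sm
    · exact ContDiff.neg hu.sm
  · intro x i
    have h := hpde x
    have l1 : pd 1 L x = _ := congrFun (Lpd 1) x
    have l0 : pd 0 L x = _ := congrFun (Lpd 0) x
    have nu : pd 1 (fun y => -u y) x = - pd 1 u x := congrFun (pd_neg (f := u) 1) x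
    rw [← l1, ← l0] at h
    rw [Fin.sum_univ_two, Fin.sum_univ_two]
    fin_cases i
    · show (pd 0 u x + pd 1 w x) + pd 0 q x = B 0 0 * (-pd 1 L x) + B 0 1 * pd 0 L x
      rw [hB00, hB01]; exact h.1
    · show (pd 0 w x + pd 1 (fun y => -u y) x) + pd 1 q x = B 1 0 * (-pd 1 L x) + B 1 1 * pd 0 L x
      rw [hB10, hB11, nu]; exact h.2
  · intro x
    rw [Fin.sum_univ_two]
    show pd 0 (fun y => -pd 1 L y) x + pd 1 (pd 0 L) x = 0
    rw [pd_neg, pd_comm hL.sm 1 0]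
    simp
  · intro x _
    have hm := hin x (e x) (he x)
    rw [add_assoc, hWe x] at hm
    show toC _ ∈ lamHull cLam (Vset r)
    convert hm using 1
    rw [hp]
    refine Prod.ext ?_ ?_ <;> apply Complex.ext <;> simp [toC]
  · have cW := Wst_cont hφ.sm hχ.sm
    have cD : Continuous (DK r) := by
      have : LipschitzWith 1 (DK r) := LipschitzWith.of_le_add fun y z => by
        rw [dist_eq_norm]; exact DK_lip r y z
      exact this.continuous
    refine int_bound s0 tε hsε (G := fun x => DK r (p + Wst φ χ x))
      (n := fun x => ‖Wst φ χ x + e x‖) (cD.comp (continuous_const.add cW)) ?_ ?_ ?_ hint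
    · simp only [Fin.sum_univ_two, Matrix.cons_val_zero, Matrix.cons_val_one]
      fun_prop
    · intro x
      have h1 := DK_lip r p (p + Wst φ χ x + e x)
      have h2 := DK_lip r (p + Wst φ χ x + e x) (p + Wst φ χ x)
      have e1 : p - (p + Wst φ χ x + e x) = -(Wst φ χ x + e x) := by abel
      have e2 : p + Wst φ χ x + e x - (p + Wst φ χ x) = e x := by abel
      rw [e1, norm_neg] at h1
      rw [e2] at h2
      have := he x
      rw [hsD]
      show DK r p ≤ DK r (p + Wst φ χ x) + t + ‖Wst φ χ x + e x‖
      linarith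
    · intro x
      refine (norm_sq_le _).trans (le_of_eq ?_)
      rw [hWe x]
      simp [Fin.sum_univ_two]
      ring
  · intro i
    fin_cases i
    · show ∫ x in unitSquare, -pd 1 L x = 0
      rw [integral_neg, hL1.integral_sq, hL.integral_pd, neg_zero]
    · show ∫ x in unitSquare, pd 0 L x = 0
      rw [hL0.integral_sq, hL.integral_pd]
  · intro i j
    fin_cases i <;> fin_cases j
    · exact iu
    · exact iw
    · exact iw
    · show ∫ x in unitSquare, -u x = 0
      rw [integral_neg, iu, neg_zero]

/-- **perturbation property in dimension 2.** Let `d = 2`, `B` a fixed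
`2×2` matrix, `r > 0`, `Q = (0,1)²`, and `𝒰_r = 𝒱_r^lc`. Then:
(i) there is a strictly increasing `Φ : [0,∞) → [0,∞)` with `Φ 0 = 0` such that for every
`w̄ ∈ 𝒰_r` there are `w = (v, U) ∈ C_c^∞(Q; ℝ² × S₀^{2×2})` and `q ∈ C_c^∞(Q)` with
`div U + ∇q = Bv`, `div v = 0` on ℝ², `w̄ + w(x) ∈ 𝒰_r` on `Q`,
`∫_Q |w|² ≥ Φ(dist(w̄, K_r))` and `∫_Q w = 0`;
(ii) `K_r ⊂ 𝒰_{r'}` whenever `r < r'`. -/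
theorem stmt17 (B : Mat 2) (r : ℝ) (hr : 0 < r) :
    (∃ Φ : ℝ → ℝ,
      StrictMonoOn Φ (Set.Ici 0) ∧ Φ 0 = 0 ∧ (∀ t ∈ Set.Ici (0 : ℝ), 0 ≤ Φ t) ∧
      ∀ wb ∈ Uset r,
        ∃ (v : Vec 2 → Vec 2) (U : Vec 2 → Mat 2) (q : Vec 2 → ℝ)
          (hU : ∀ x, U x ∈ S0 2),
          ContDiff ℝ (⊤ : ℕ∞) v ∧
          (∀ i j, ContDiff ℝ (⊤ : ℕ∞) (fun x => U x i j)) ∧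
          ContDiff ℝ (⊤ : ℕ∞) q ∧
          HasCompactSupport v ∧ tsupport v ⊆ unitSquare ∧
          HasCompactSupport U ∧ tsupport U ⊆ unitSquare ∧
          HasCompactSupport q ∧ tsupport q ⊆ unitSquare ∧
          -- div U + ∇q = B v and div v = 0 on ℝ²
          (∀ x i, (∑ j, pd j (fun y => U y i j) x) + pd i q x = ∑ j, B i j * v x j) ∧
          (∀ x, ∑ i, pd i (fun y => v y i) x = 0) ∧
          -- w̄ + w(x) ∈ 𝒰_r on Q
          (∀ x ∈ unitSquare, (wb.1 + v x, wb.2 + (⟨U x, hU x⟩ : S0 2)) ∈ Uset r) ∧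
          -- ∫_Q |w|² ≥ Φ(dist(w̄, K_r))
          ((∫ x in unitSquare, ((∑ i, (v x i) ^ 2) + ∑ i, ∑ j, (U x i j) ^ 2))
            ≥ Φ (Metric.infDist wb (Kset 2 r))) ∧
          -- ∫_Q w = 0
          (∀ i, (∫ x in unitSquare, v x i) = 0) ∧
          (∀ i j, (∫ x in unitSquare, U x i j) = 0)) ∧
    (∀ r' : ℝ, r < r' → Kset 2 r ⊆ Uset r') := by
  refine ⟨⟨fun t => t ^ 2 / 2, ?_, by norm_num, fun t _ => by positivity, ?_⟩,
    fun r' h => part_two hr h⟩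
  · intro x hx y hy hxy
    have hx0 : (0:ℝ) ≤ x := hx
    show x ^ 2 / 2 < y ^ 2 / 2
    nlinarith
  · intro wb hwb
    exact part_one B r hr wb hwb
end
end
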